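/- Let G be a group carrying an invariant finitely additive probability measure μ, let r ≥ 1, and let c : G → Fin r be any coloring of G. Then μ({y ∈ G : μ({x ∈ G : c(x) = c(y) ∧ c(x·y) = c(y) ∧ c(y·x) = c(y)}) > 0}) > 0. -/

import Mathlib

/-- A two-sided invariant finitely additive probability measure on a group `G`. -/
structure IsInvFAPM {G : Type*} [Group G] (μ : Set G → ℝ) : Prop where
  nonneg : ∀ A : Set G, 0 ≤ μ A
  total : μ (Set.univ : Set G) = 1
  additive : ∀ A B : Set G, Disjoint A B → μ (A ∪ B) = μ A + μ B
  left_invariant : ∀ (g : G) (A : Set G), μ ((g * ·) '' A) = μ A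
  right_invariant : ∀ (g : G) (A : Set G), μ ((· * g) '' A) = μ A

/-!
The invariant measure integrates bounded functions, and corners `x`, `(1, y) • x`, `(y, y) • x` for
actions of `G × G` replace the triples `x`, `x * y`, `y * x`: for the two-sided action of `G × G` on
`G`, substituting `x * y` for `x` turns the former into the latter. Writing one set as a product
over all colours of positive measure, in a power of this action, reduces the colouring theorem to
recurrence: for every set `A` of positive measure in a measure-preserving action of `G × G`, corners
in `A` have positive density. We may take the measure to be ergodic.

By van der Corput's inequality, the corner form with a function `f` at one vertex is controlled by
the correlation of `f`, in an ergodic extension, with products `a * b` where `a` and `b` are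
invariant along the two edges through that vertex. So if combinations of such products, taken over
all ergodic extensions, approximate the indicator function of `A` almost as well as possible, then
the error does not contribute to the corner form.

As in the strong regularity lemma, two approximations are used: a coarse one yields a cell of
non-negligible measure in which it is bounded below, and a second one, whose error is tiny compared
to the measure of that cell, stays bounded below on most of the cell by the parallelogram law.
Ergodicity then allows one to count the corners in the cell.
-/

namespace NoncommSchur

open Filter MeasureTheory Topology

local notation:max "𝟙" s:max => Set.indicator (M := ℝ) s 1

/-! ### Bounded functions and means -/

section Bounded

variable {X Y : Type*} {f g : X → ℝ}

/-- Boundedness of a real function, set up as a `fun_prop` predicate so that it is discharged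
automatically. -/
@[fun_prop]
def Bdd (f : X → ℝ) : Prop := ∃ C, ∀ x, |f x| ≤ C

namespace Bdd

@[fun_prop]
theorem const (c : ℝ) : Bdd fun _ : X => c := ⟨|c|, fun _ => le_rfl⟩

@[fun_prop]
theorem comp (hf : Bdd f) (φ : Y → X) : Bdd fun y => f (φ y) :=
  let ⟨C, hC⟩ := hf; ⟨C, fun y => hC (φ y)⟩

@[fun_prop]
theorem add (hf : Bdd f) (hg : Bdd g) : Bdd fun x => f x + g x :=
  let ⟨C, hC⟩ := hf; let ⟨D, hD⟩ := hg
  ⟨C + D, fun x => (abs_add_le _ _).trans (add_le_add (hC x) (hD x))⟩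

@[fun_prop]
theorem mul (hf : Bdd f) (hg : Bdd g) : Bdd fun x => f x * g x := by
  obtain ⟨C, hC⟩ := hf
  obtain ⟨D, hD⟩ := hg
  refine ⟨C * D, fun x => ?_⟩
  rw [abs_mul]
  exact mul_le_mul (hC x) (hD x) (abs_nonneg _) ((abs_nonneg _).trans (hC x))

@[fun_prop]
theorem sub (hf : Bdd f) (hg : Bdd g) : Bdd fun x => f x - g x := by
  simpa only [sub_eq_add_neg, neg_one_mul] using hf.add ((const (-1)).mul hg)

@[fun_prop]
theorem pow (hf : Bdd f) (n : ℕ) : Bdd fun x => f x ^ n :=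
  let ⟨C, hC⟩ := hf
  ⟨C ^ n, fun x => by rw [abs_pow]; exact pow_le_pow_left₀ (abs_nonneg _) (hC x) n⟩

@[fun_prop]
theorem prod {ι : Type*} {F : ι → X → ℝ} {s : Finset ι} (hF : ∀ i, Bdd (F i)) :
    Bdd fun x => ∏ i ∈ s, F i x := by
  choose C hC using hF
  refine ⟨∏ i ∈ s, C i, fun x => ?_⟩
  rw [Finset.abs_prod]
  exact Finset.prod_le_prod (fun _ _ => abs_nonneg _) fun i _ => hC i x

theorem of_finite_range (h : (Set.range f).Finite) : Bdd f := by
  obtain ⟨C, hC⟩ := (h.image (|·|)).bddAbove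
  exact ⟨C, fun x => hC ⟨f x, ⟨x, rfl⟩, rfl⟩⟩

theorem exists_finite_range_approx (hf : Bdd f) {ε : ℝ} (hε : 0 < ε) :
    ∃ g : X → ℝ, (Set.range g).Finite ∧ ∀ x, g x ≤ f x ∧ f x ≤ g x + ε := by
  obtain ⟨C, hC⟩ := hf
  refine ⟨fun x => ε * ⌊f x / ε⌋, ?_, fun x => ⟨?_, ?_⟩⟩
  · refine ((Set.finite_Icc ⌊-C / ε⌋ ⌊C / ε⌋).image fun k : ℤ => ε * (k : ℝ)).subset ?_
    rintro _ ⟨x, rfl⟩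
    have hx := abs_le.1 (hC x)
    exact ⟨⌊f x / ε⌋, ⟨Int.floor_mono (by gcongr; exact hx.1),
      Int.floor_mono (by gcongr; exact hx.2)⟩, rfl⟩
  · have := (le_div_iff₀ hε).1 (Int.floor_le (f x / ε))
    linarith
  · have := (div_le_iff₀ hε).1 (Int.lt_floor_add_one (f x / ε)).le
    linarith

end Bdd

@[fun_prop]
theorem bdd_indicator (B : Set X) : Bdd 𝟙B :=
  ⟨1, fun x => by by_cases h : x ∈ B <;> simp [h]⟩

theorem indicator_one_nonneg (B : Set X) (x : X) : 0 ≤ 𝟙B x :=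
  Set.indicator_nonneg (fun _ _ => zero_le_one) x

theorem indicator_one_le_one (B : Set X) (x : X) : 𝟙B x ≤ 1 :=
  Set.indicator_le' (fun _ _ => le_rfl) (fun _ _ => zero_le_one) x

theorem abs_indicator_one_le_one (B : Set X) (x : X) : |𝟙B x| ≤ 1 := by
  rw [abs_of_nonneg (indicator_one_nonneg B x)]
  exact indicator_one_le_one B x

theorem finite_range_indicator_one (B : Set X) : (Set.range 𝟙B).Finite :=
  (Set.toFinite ({0, 1} : Set ℝ)).subset <| by
    rintro _ ⟨x, rfl⟩
    by_cases h : x ∈ B <;> simp [h]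

end Bounded

/-- A finitely additive, nonnegative set function defined on all subsets. -/
structure IsContent {X : Type*} (ν : Set X → ℝ) : Prop where
  nonneg : ∀ B, 0 ≤ ν B
  union : ∀ A B, Disjoint A B → ν (A ∪ B) = ν A + ν B

namespace IsContent

variable {X : Type*} {ν : Set X → ℝ} {A B : Set X}

theorem empty (hν : IsContent ν) : ν ∅ = 0 := by
  simpa using hν.union ∅ ∅ (Set.disjoint_empty ∅)

theorem inter_add_diff (hν : IsContent ν) (A B : Set X) : ν (A ∩ B) + ν (A \ B) = ν A := by
  rw [← hν.union _ _ Set.disjoint_sdiff_inter.symm, Set.inter_union_sdiff]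

theorem mono (hν : IsContent ν) (h : A ⊆ B) : ν A ≤ ν B := by
  have := hν.inter_add_diff B A
  rw [Set.inter_eq_right.2 h] at this
  linarith [hν.nonneg (B \ A)]

theorem union_le (hν : IsContent ν) (A B : Set X) : ν (A ∪ B) ≤ ν A + ν B := by
  rw [← Set.union_sdiff_self, hν.union _ _ Set.disjoint_sdiff_right]
  gcongr
  exact hν.mono Set.sdiff_subset

theorem iUnion_le (hν : IsContent ν) {ι : Type*} [Fintype ι] (B : ι → Set X) :
    ν (⋃ i, B i) ≤ ∑ i, ν (B i) := by
  classical
  suffices h : ∀ s : Finset ι, ν (⋃ i ∈ s, B i) ≤ ∑ i ∈ s, ν (B i) by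
    simpa using h Finset.univ
  intro s
  induction s using Finset.induction_on with
  | empty => simp [hν.empty]
  | insert i s hi ih =>
    rw [Finset.set_biUnion_insert, Finset.sum_insert hi]
    exact (hν.union_le _ _).trans (by gcongr)

theorem eq_sum_fiber (hν : IsContent ν) {J : Type*} [Fintype J] (p : X → J) (B : Set X) :
    ν B = ∑ j, ν (B ∩ p ⁻¹' {j}) := by
  classical
  suffices h : ∀ s : Finset J, ν (B ∩ p ⁻¹' s) = ∑ j ∈ s, ν (B ∩ p ⁻¹' {j}) by
    simpa using h Finset.univ
  intro s
  induction s using Finset.induction_on with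
  | empty => simp [hν.empty]
  | insert j s hj ih =>
    rw [Finset.sum_insert hj, ← ih, Finset.coe_insert, Set.insert_eq, Set.preimage_union,
      Set.inter_union_distrib_left]
    refine hν.union _ _ (Set.disjoint_left.2 ?_)
    rintro x ⟨-, rfl : p x = j⟩ ⟨-, hx⟩
    exact hj hx

theorem null_fiber (hν : IsContent ν) {J : Type*} [Finite J] (p : X → J) :
    ν {x | ν (p ⁻¹' {p x}) = 0} = 0 := by
  have := Fintype.ofFinite J
  rw [hν.eq_sum_fiber p]
  refine Finset.sum_eq_zero fun j _ => ?_
  by_cases hj : ν (p ⁻¹' {j}) = 0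
  · exact le_antisymm (hj ▸ hν.mono Set.inter_subset_right) (hν.nonneg _)
  · convert hν.empty
    refine Set.eq_empty_of_forall_notMem ?_
    rintro x ⟨hx, rfl : p x = j⟩
    exact hj hx

theorem dense_fiber_le (hν : IsContent ν) {J : Type*} [Finite J] (p : X → J) (H : Set X)
    {a : ℝ} (ha : 0 ≤ a) :
    ν {x | ν (p ⁻¹' {p x}) < a * ν (p ⁻¹' {p x} ∩ H)} ≤ a * ν H := by
  have := Fintype.ofFinite J
  rw [hν.eq_sum_fiber p, hν.eq_sum_fiber p H, Finset.mul_sum]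
  refine Finset.sum_le_sum fun j _ => ?_
  rw [Set.inter_comm H]
  by_cases hj : ν (p ⁻¹' {j}) < a * ν (p ⁻¹' {j} ∩ H)
  · exact (hν.mono Set.inter_subset_right).trans hj.le
  · refine le_of_eq_of_le ?_ (mul_nonneg ha (hν.nonneg _))
    convert hν.empty
    refine Set.eq_empty_of_forall_notMem ?_
    rintro x ⟨hx, rfl : p x = j⟩
    exact hj hx

end IsContent

/-- A mean on `X`. It is linear on all real functions, but only its values on bounded functions
are meaningful: positivity is required for those alone. -/
structure Mean (X : Type*) extends (X → ℝ) →ₗ[ℝ] ℝ where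
  nonneg' : ∀ f, Bdd f → (∀ x, 0 ≤ f x) → 0 ≤ toLinearMap f
  one' : toLinearMap (fun _ => 1) = 1

namespace Mean

variable {X Y : Type*}

instance : CoeFun (Mean X) fun _ => (X → ℝ) → ℝ := ⟨fun m => m.toLinearMap⟩

variable (m : Mean X) {f g : X → ℝ}

theorem add (f g : X → ℝ) : (m fun x => f x + g x) = m f + m g := m.map_add f g

theorem sub (f g : X → ℝ) : (m fun x => f x - g x) = m f - m g := m.map_sub f g

theorem const_mul (c : ℝ) (f : X → ℝ) : (m fun x => c * f x) = c * m f := m.map_smul c f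

theorem mul_const (c : ℝ) (f : X → ℝ) : (m fun x => f x * c) = m f * c := by
  simp_rw [mul_comm _ c]
  exact m.const_mul c f

theorem const (c : ℝ) : (m fun _ => c) = c := by
  simpa [m.one'] using m.const_mul c fun _ => 1

theorem sum {ι : Type*} (F : ι → X → ℝ) (s : Finset ι) :
    (m fun x => ∑ i ∈ s, F i x) = ∑ i ∈ s, m (F i) := by
  rw [← map_sum]
  congr 1
  exact funext fun x => (Finset.sum_apply x s F).symm

theorem nonneg (hf : Bdd f) (h : ∀ x, 0 ≤ f x) : 0 ≤ m f := m.nonneg' f hf h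

theorem mono (hf : Bdd f) (hg : Bdd g) (h : ∀ x, f x ≤ g x) : m f ≤ m g := by
  have := m.nonneg (hg.sub hf) fun x => sub_nonneg.2 (h x)
  rwa [m.sub, sub_nonneg] at this

theorem abs_le {C : ℝ} (h : ∀ x, |f x| ≤ C) : |m f| ≤ C := by
  have hf : Bdd f := ⟨C, h⟩
  refine _root_.abs_le.2 ⟨?_, ?_⟩
  · rw [← m.const (-C)]
    exact m.mono (.const _) hf fun x => (_root_.abs_le.1 (h x)).1
  · rw [← m.const C]
    exact m.mono hf (.const _) fun x => (_root_.abs_le.1 (h x)).2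

theorem sq_mul_le {F V : X → ℝ} (hF : ∀ x, |F x| ≤ 1) (hV : Bdd V) :
    (m fun x => F x * V x) ^ 2 ≤ m fun x => V x ^ 2 := by
  set t := m fun x => F x * V x with ht
  have hFb : Bdd F := ⟨1, hF⟩
  have key : 0 ≤ m fun x => V x ^ 2 - 2 * t * (F x * V x) + t ^ 2 := by
    refine m.nonneg (by fun_prop) fun x => ?_
    have hF2 : F x ^ 2 ≤ 1 := (sq_le_one_iff_abs_le_one _).2 (hF x)
    nlinarith [sq_nonneg (V x - t * F x), sq_nonneg t]
  rw [m.add, m.sub, m.const_mul, m.const, ← ht] at key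
  linarith

/-- The push-forward of a mean. -/
def map (m : Mean X) (φ : X → Y) : Mean Y where
  toLinearMap := m.toLinearMap.comp (LinearMap.funLeft ℝ ℝ φ)
  nonneg' _ hf h := m.nonneg (hf.comp φ) fun x => h (φ x)
  one' := m.const 1

theorem map_apply (φ : X → Y) (f : Y → ℝ) : m.map φ f = m fun x => f (φ x) := rfl

@[fun_prop]
theorem bdd_apply {F : Y → X → ℝ} (hF : Bdd fun z : Y × X => F z.1 z.2) :
    Bdd fun y => m (F y) :=
  let ⟨C, hC⟩ := hF; ⟨C, fun y => m.abs_le fun x => hC (y, x)⟩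

/-- The product of two means. There is no Fubini theorem for means; here the second variable is
integrated first. -/
def prod (κ : Mean Y) (m : Mean X) : Mean (Y × X) where
  toFun F := κ fun y => m fun x => F (y, x)
  map_add' F F' := by rw [← κ.add]; exact congrArg κ (funext fun y => m.add _ _)
  map_smul' c F := by
    rw [RingHom.id_apply, smul_eq_mul, ← κ.const_mul]
    exact congrArg κ (funext fun y => m.const_mul _ _)
  nonneg' F hF h := κ.nonneg (m.bdd_apply hF) fun y => m.nonneg (by fun_prop) fun x => h (y, x)
  one' := by simp only [LinearMap.coe_mk, AddHom.coe_mk, m.const, κ.const]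

theorem prod_apply (κ : Mean Y) (m : Mean X) (F : Y × X → ℝ) :
    κ.prod m F = κ fun y => m fun x => F (y, x) := rfl

/-- The set function of a mean. -/
noncomputable def content (m : Mean X) (B : Set X) : ℝ := m 𝟙B

theorem isContent : IsContent m.content where
  nonneg B := m.nonneg (by fun_prop) (indicator_one_nonneg B)
  union A B h := by
    rw [content, Set.indicator_union_of_disjoint h]
    exact m.add _ _

theorem content_univ : m.content Set.univ = 1 := by
  rw [content, Set.indicator_univ]
  exact m.const 1

theorem content_preimage (φ : X → Y) (B : Set Y) : m.content (φ ⁻¹' B) = (m.map φ).content B :=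
  rfl

theorem content_le_one (B : Set X) : m.content B ≤ 1 :=
  (m.isContent.mono (Set.subset_univ B)).trans_eq m.content_univ

theorem mul_content_le (hf : Bdd f) (h0 : ∀ x, 0 ≤ f x) {a : ℝ} {B : Set X}
    (hB : ∀ x ∈ B, a ≤ f x) : a * m.content B ≤ m f := by
  rw [content, ← m.const_mul]
  refine m.mono (by fun_prop) hf fun x => ?_
  by_cases hx : x ∈ B
  · simpa [hx] using hB x hx
  · simpa [hx] using h0 x

theorem apply_of_finite_range (hf : (Set.range f).Finite) :
    m f = ∑ v ∈ hf.toFinset, v * m.content (f ⁻¹' {v}) := by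
  simp_rw [content, ← m.const_mul, ← m.sum]
  refine congrArg m (funext fun x => ?_)
  rw [Finset.sum_eq_single (f x)]
  · simp
  · intro v _ hv
    simp [hv.symm]
  · exact fun h => absurd (hf.mem_toFinset.2 ⟨x, rfl⟩) h

theorem eq_of_content_eq {m n : Mean X} (h : m.content = n.content) (hf : Bdd f) : m f = n f := by
  have key : ∀ m' n' : Mean X, m'.content = n'.content → m' f ≤ n' f := fun m' n' h' => by
    refine le_of_forall_pos_le_add fun ε hε => ?_
    obtain ⟨g, hg, hgf⟩ := hf.exists_finite_range_approx hε
    have hgb : Bdd g := .of_finite_range hg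
    calc m' f ≤ m' fun x => g x + ε := m'.mono hf (by fun_prop) fun x => (hgf x).2
      _ = n' g + ε := by
        rw [m'.add, m'.const, m'.apply_of_finite_range hg, n'.apply_of_finite_range hg, h']
      _ ≤ n' f + ε := by gcongr; exact n'.mono hgb hf fun x => (hgf x).1
  exact le_antisymm (key m n h) (key n m h.symm)

end Mean

/-! ### Extending contents to means -/

section ExistsMean

variable {X : Type*}

/-- The space of bounded functions, the largest one on which positivity of a mean is required. -/
def boundedFunctions (X : Type*) : Submodule ℝ (X → ℝ) where
  carrier := {f | Bdd f}
  add_mem' hf hg := hf.add hg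
  zero_mem' := Bdd.const 0
  smul_mem' c _ hf := (Bdd.const c).mul hf

theorem exists_positive_extension [MeasurableSpace X] {Φ : SimpleFunc X ℝ →ₗ[ℝ] ℝ}
    (hΦ : ∀ s : SimpleFunc X ℝ, (∀ x, 0 ≤ s x) → 0 ≤ Φ s) :
    ∃ g : boundedFunctions X →ₗ[ℝ] ℝ, (∀ f, (∀ x, 0 ≤ f.1 x) → 0 ≤ g f) ∧
      ∀ s : SimpleFunc X ℝ, g ⟨s, .of_finite_range s.finite_range⟩ = Φ s := by
  let J : SimpleFunc X ℝ →ₗ[ℝ] boundedFunctions X :=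
    { toFun := fun s => ⟨s, .of_finite_range s.finite_range⟩
      map_add' := fun _ _ => rfl
      map_smul' := fun _ _ => rfl }
  have hJ : Function.Injective J := fun _ _ h => DFunLike.coe_injective (congrArg Subtype.val h)
  let e := LinearEquiv.ofInjective J hJ
  let positive : PointedCone ℝ (boundedFunctions X) :=
    { carrier := {f | ∀ x, 0 ≤ f.1 x}
      add_mem' := fun hf hg x => add_nonneg (hf x) (hg x)
      zero_mem' := fun _ => le_rfl
      smul_mem' := fun c _ hf x => mul_nonneg c.2 (hf x) }
  have he : ∀ s, e.symm ⟨J s, s, rfl⟩ = s := e.symm_apply_apply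
  obtain ⟨g, hg, hpos⟩ := riesz_extension positive
    ⟨LinearMap.range J, Φ.comp e.symm.toLinearMap⟩
    (by
      rintro ⟨_, s, rfl⟩ hs
      exact (hΦ s hs).trans_eq (congrArg Φ (he s).symm))
    (by
      rintro ⟨f, C, hC⟩
      refine ⟨⟨J (SimpleFunc.const X C), _, rfl⟩, fun x => ?_⟩
      exact neg_le_iff_add_nonneg'.1 (abs_le.1 (hC x)).1)
  exact ⟨g, hpos, fun s => (hg ⟨J s, s, rfl⟩).trans (congrArg Φ (he s))⟩

namespace IsContent

variable {ν : Set X → ℝ}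

/-- Multiplication by `ν B`, the form in which the library's `setToSimpleFunc` takes the weight of
a set. -/
noncomputable def weight (ν : Set X → ℝ) (B : Set X) : ℝ →L[ℝ] ℝ :=
  ν B • ContinuousLinearMap.id ℝ ℝ

variable [MeasurableSpace X]

-- With respect to the zero measure all simple functions are integrable.
theorem finMeasAdditive_weight (hν : IsContent ν) :
    FinMeasAdditive (0 : Measure X) (weight ν) := fun A B _ _ _ _ h => by
  simp only [weight, hν.union A B h, add_smul]

/-- The integral of simple functions against a content. -/
noncomputable def simpleIntegral (hν : IsContent ν) : SimpleFunc X ℝ →ₗ[ℝ] ℝ where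
  toFun := SimpleFunc.setToSimpleFunc (weight ν)
  map_add' _ _ := SimpleFunc.setToSimpleFunc_add _ hν.finMeasAdditive_weight
    integrable_zero_measure integrable_zero_measure
  map_smul' c _ := SimpleFunc.setToSimpleFunc_smul_real _ hν.finMeasAdditive_weight c
    integrable_zero_measure

theorem simpleIntegral_nonneg (hν : IsContent ν) {s : SimpleFunc X ℝ} (hs : ∀ x, 0 ≤ s x) :
    0 ≤ hν.simpleIntegral s :=
  SimpleFunc.setToSimpleFunc_nonneg (weight ν) (fun B _ hx => mul_nonneg (hν.nonneg B) hx) s hs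

theorem simpleIntegral_indicator (hν : IsContent ν) {B : Set X} (hB : MeasurableSet B) :
    hν.simpleIntegral (.piecewise B hB (.const X 1) (.const X 0)) = ν B :=
  (SimpleFunc.setToSimpleFunc_indicator (weight ν) (by simp [weight, hν.empty]) hB 1).trans
    (mul_one _)

end IsContent

theorem exists_mean {ν : Set X → ℝ} (hν : IsContent ν) (huniv : ν Set.univ = 1) :
    ∃ m : Mean X, m.content = ν := by
  let _ : MeasurableSpace X := ⊤
  obtain ⟨g, hpos, hg⟩ := exists_positive_extension fun _ => hν.simpleIntegral_nonneg
  obtain ⟨m, rfl⟩ := LinearMap.exists_extend g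
  have hm : ∀ B : Set X, m 𝟙B = ν B := fun B => by
    have hB : MeasurableSet B := trivial
    classical
    have hcoe : 𝟙B = SimpleFunc.piecewise B hB (SimpleFunc.const X (1 : ℝ)) (.const X 0) := by
      ext x
      by_cases hx : x ∈ B <;> simp [hx]
    rw [hcoe]
    exact (hg _).trans (hν.simpleIntegral_indicator hB)
  refine ⟨⟨m, fun f hf h => hpos ⟨f, hf⟩ h, ?_⟩, funext hm⟩
  exact (congrArg m (Set.indicator_univ 1).symm).trans ((hm _).trans huniv)

end ExistsMean

/-! ### Ergodic means -/

section Ergodic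

variable {X K : Type*} (Γ : Type*) [SMul Γ X] [SMul Γ K]

/-- Invariance of a mean under an action. -/
def Mean.IsInvariant (m : Mean X) : Prop :=
  ∀ (g : Γ) (f : X → ℝ), Bdd f → (m fun x => f (g • x)) = m f

/-- An invariant finitely additive probability, the counterpart of an invariant mean among set
functions; these form a compact convex subset of `Set X → ℝ`. -/
structure IsInvariantProb (ν : Set X → ℝ) : Prop extends IsContent ν where
  univ : ν Set.univ = 1
  preimage_smul : ∀ (g : Γ) (B : Set X), ν ((g • ·) ⁻¹' B) = ν B

/-- Ergodicity of a mean, defined as extremality among the invariant finitely additive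
probabilities; in particular an ergodic mean is invariant. -/
def Mean.IsErgodic (m : Mean X) : Prop :=
  m.content ∈ Set.extremePoints ℝ {ν : Set X → ℝ | IsInvariantProb Γ ν}

variable {Γ}

theorem Mean.isInvariant_iff {m : Mean X} : m.IsInvariant Γ ↔ IsInvariantProb Γ m.content where
  mp h := ⟨m.isContent, m.content_univ, fun g B => h g 𝟙B (by fun_prop)⟩
  mpr h g f hf := by
    have hmap : (m.map (g • ·)).content = m.content := funext (h.preimage_smul g)
    exact Mean.eq_of_content_eq hmap hf

theorem Mean.IsErgodic.isInvariant {m : Mean X} (hm : m.IsErgodic Γ) : m.IsInvariant Γ :=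
  Mean.isInvariant_iff.2 hm.1

theorem Mean.IsInvariant.prod {κ : Mean K} {m : Mean X} (hκ : κ.IsInvariant Γ)
    (hm : m.IsInvariant Γ) : (κ.prod m).IsInvariant Γ := fun g F hF => by
  rw [Mean.prod_apply, Mean.prod_apply, ← hκ g (fun k => m fun x => F (k, x)) (by fun_prop)]
  exact congrArg κ (funext fun k => hm g (fun x => F (g • k, x)) (by fun_prop))

theorem IsContent.isInvariantProb_inv_smul {ℓ : Set X → ℝ} (hℓ : IsContent ℓ)
    (hinv : ∀ (g : Γ) (B : Set X), ℓ ((g • ·) ⁻¹' B) = ℓ B) (hpos : 0 < ℓ Set.univ) :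
    IsInvariantProb Γ ((ℓ Set.univ)⁻¹ • ℓ) where
  nonneg B := mul_nonneg (inv_nonneg.2 hpos.le) (hℓ.nonneg B)
  union A B h := by simp only [Pi.smul_apply, hℓ.union A B h, smul_add]
  univ := inv_mul_cancel₀ hpos.ne'
  preimage_smul g B := by simp only [Pi.smul_apply, hinv]

theorem Mean.IsErgodic.eq_mul_of_le {m : Mean X} (hm : m.IsErgodic Γ) {ℓ : Set X → ℝ}
    (hℓ : IsContent ℓ) (hinv : ∀ (g : Γ) (B : Set X), ℓ ((g • ·) ⁻¹' B) = ℓ B)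
    (hle : ∀ B, ℓ B ≤ m.content B) (B : Set X) : ℓ B = ℓ Set.univ * m.content B := by
  have hsub : IsContent (m.content - ℓ) :=
    ⟨fun B => sub_nonneg.2 (hle B), fun A B h => by
      simp only [Pi.sub_apply, m.isContent.union A B h, hℓ.union A B h]; ring⟩
  have hsub_inv : ∀ (g : Γ) (B : Set X),
      (m.content - ℓ) ((g • ·) ⁻¹' B) = (m.content - ℓ) B := fun g B => by
    simp only [Pi.sub_apply, hm.1.preimage_smul, hinv]
  have huniv : (m.content - ℓ) Set.univ = 1 - ℓ Set.univ := by
    rw [Pi.sub_apply, m.content_univ]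
  rcases (hℓ.nonneg Set.univ).eq_or_lt with h0 | h0
  · rw [← h0, zero_mul]
    exact le_antisymm (h0 ▸ hℓ.mono B.subset_univ) (hℓ.nonneg B)
  rcases (hsub.nonneg Set.univ).eq_or_lt with h1 | h1
  · have hB := h1 ▸ hsub.mono B.subset_univ
    rw [Pi.sub_apply] at hB
    rw [show ℓ Set.univ = 1 by linarith, one_mul]
    linarith [hle B]
  have hseg : m.content ∈ openSegment ℝ ((ℓ Set.univ)⁻¹ • ℓ)
      (((m.content - ℓ) Set.univ)⁻¹ • (m.content - ℓ)) :=
    ⟨ℓ Set.univ, _, h0, h1, by rw [huniv]; ring, by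
      rw [smul_inv_smul₀ h0.ne', smul_inv_smul₀ h1.ne']; abel⟩
  have heq := hm.2 (hℓ.isInvariantProb_inv_smul hinv h0)
    (hsub.isInvariantProb_inv_smul hsub_inv h1) hseg
  rw [← heq, Pi.smul_apply, smul_eq_mul, mul_inv_cancel_left₀ h0.ne']

theorem isCompact_isInvariantProb : IsCompact {ν : Set X → ℝ | IsInvariantProb Γ ν} := by
  refine (isCompact_univ_pi fun _ => isCompact_Icc (a := (0 : ℝ)) (b := 1)).of_isClosed_subset ?_
    fun ν hν B _ => ⟨hν.nonneg B, hν.univ ▸ hν.mono B.subset_univ⟩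
  have : {ν : Set X → ℝ | IsInvariantProb Γ ν} = {ν | (∀ B, 0 ≤ ν B) ∧
      (∀ A B, Disjoint A B → ν (A ∪ B) = ν A + ν B) ∧ ν Set.univ = 1 ∧
      ∀ (g : Γ) B, ν ((g • ·) ⁻¹' B) = ν B} :=
    Set.ext fun ν => ⟨fun h => ⟨h.nonneg, h.union, h.univ, h.preimage_smul⟩,
      fun h => ⟨⟨h.1, h.2.1⟩, h.2.2.1, h.2.2.2⟩⟩
  rw [this]
  simp only [Set.ofPred_and, Set.ofPred_forall]
  refine (isClosed_iInter fun B => isClosed_le (by fun_prop) (by fun_prop)).inter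
    ((isClosed_iInter fun A => isClosed_iInter fun B => isClosed_iInter fun _ =>
      isClosed_eq (by fun_prop) (by fun_prop)).inter
    ((isClosed_eq (by fun_prop) (by fun_prop)).inter
    (isClosed_iInter fun g => isClosed_iInter fun B => isClosed_eq (by fun_prop) (by fun_prop))))

/-- On a closed face of the invariant probabilities, a linear functional is maximized at an
extreme point. -/
theorem exists_ergodic_ge {C : Set (Set X → ℝ)} (hC : IsClosed C)
    (hface : IsExtreme ℝ {ν : Set X → ℝ | IsInvariantProb Γ ν} C) {m₀ : Mean X}
    (hm₀ : m₀.content ∈ C) {F : X → ℝ} (hF : (Set.range F).Finite) :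
    ∃ m : Mean X, m.IsErgodic Γ ∧ m.content ∈ C ∧ m₀ F ≤ m F := by
  have hcompact : IsCompact C := isCompact_isInvariantProb.of_isClosed_subset hC hface.subset
  let l : (Set X → ℝ) →L[ℝ] ℝ :=
    ∑ v ∈ hF.toFinset, v • ContinuousLinearMap.proj (R := ℝ) (φ := fun _ => ℝ) (F ⁻¹' {v})
  have hl : ∀ m : Mean X, l m.content = m F := fun m => by
    simp [l, m.apply_of_finite_range hF]
  have hexp := ContinuousLinearMap.toExposed.isExposed (l := l) (A := C)
  obtain ⟨ν, hν, hmax⟩ := hcompact.exists_isMaxOn ⟨_, hm₀⟩ l.continuous.continuousOn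
  obtain ⟨ν, hν⟩ := (hexp.isCompact hcompact).extremePoints_nonempty ⟨ν, hν, fun y hy => hmax hy⟩
  have hνC : ν ∈ C := hν.1.1
  obtain ⟨m, rfl⟩ := exists_mean (hface.subset hνC).toIsContent (hface.subset hνC).univ
  refine ⟨m, (hface.trans hexp.isExtreme).extremePoints_subset_extremePoints hν, hνC, ?_⟩
  rw [← hl, ← hl]
  exact hν.1.2 _ hm₀

theorem exists_ergodic_absolutelyContinuous {m₀ : Mean X} (hm₀ : m₀.IsInvariant Γ) (A : Set X) :
    ∃ m : Mean X, m.IsErgodic Γ ∧ m₀.content A ≤ m.content A ∧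
      ∀ B, m₀.content B = 0 → m.content B = 0 := by
  set C : Set (Set X → ℝ) :=
    {ν | IsInvariantProb Γ ν} ∩ {ν | ∀ B, m₀.content B = 0 → ν B = 0} with hC
  have hclosed : IsClosed C := by
    simp only [hC, Set.ofPred_forall]
    exact isCompact_isInvariantProb.isClosed.inter (isClosed_iInter fun B =>
      isClosed_iInter fun _ => isClosed_eq (by fun_prop) (by fun_prop))
  have hface : IsExtreme ℝ {ν : Set X → ℝ | IsInvariantProb Γ ν} C := by
    refine ⟨Set.inter_subset_left, ?_⟩
    rintro ν₁ hν₁ ν₂ hν₂ _ ⟨-, hnull⟩ ⟨a, b, ha, hb, -, rfl⟩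
    refine ⟨hν₁, fun B hB => ?_⟩
    have hsum := hnull B hB
    have h₁ := hν₁.nonneg B
    have h₂ := mul_nonneg hb.le (hν₂.nonneg B)
    simp only [Pi.add_apply, Pi.smul_apply, smul_eq_mul] at hsum
    nlinarith
  obtain ⟨m, hm, hmC, hle⟩ := exists_ergodic_ge hclosed hface (m₀ := m₀)
    ⟨Mean.isInvariant_iff.1 hm₀, fun _ => id⟩ (finite_range_indicator_one A)
  exact ⟨m, hm, hle, hmC.2⟩

theorem IsInvariantProb.preimage_snd {ν : Set (K × X) → ℝ} (hν : IsInvariantProb Γ ν) :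
    IsInvariantProb Γ fun B : Set X => ν (Prod.snd ⁻¹' B) where
  nonneg _ := hν.nonneg _
  union _ _ h := hν.union _ _ (h.preimage _)
  univ := hν.univ
  preimage_smul g B := hν.preimage_smul g (Prod.snd ⁻¹' B)

theorem exists_ergodic_extension {κ : Mean K} {m : Mean X} (hκ : κ.IsInvariant Γ)
    (hm : m.IsErgodic Γ) {F : K × X → ℝ} (hF : (Set.range F).Finite) :
    ∃ n : Mean (K × X), n.IsErgodic Γ ∧ (∀ f : X → ℝ, Bdd f → (n fun z => f z.2) = m f) ∧
      κ.prod m F ≤ n F := by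
  set C : Set (Set (K × X) → ℝ) :=
    {ν | IsInvariantProb Γ ν} ∩ {ν | ∀ B, ν (Prod.snd ⁻¹' B) = m.content B} with hC
  have hclosed : IsClosed C := by
    simp only [hC, Set.ofPred_forall]
    exact isCompact_isInvariantProb.isClosed.inter
      (isClosed_iInter fun B => isClosed_eq (by fun_prop) (by fun_prop))
  have hface : IsExtreme ℝ {ν : Set (K × X) → ℝ | IsInvariantProb Γ ν} C := by
    refine ⟨Set.inter_subset_left, ?_⟩
    rintro ν₁ hν₁ ν₂ hν₂ _ ⟨-, hsnd⟩ ⟨a, b, ha, hb, hab, rfl⟩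
    refine ⟨hν₁, congrFun (hm.2 hν₁.preimage_snd hν₂.preimage_snd
      ⟨a, b, ha, hb, hab, funext hsnd⟩)⟩
  have hprod : (κ.prod m).content ∈ C :=
    ⟨Mean.isInvariant_iff.1 (hκ.prod hm.isInvariant), fun B => κ.const (m 𝟙B)⟩
  obtain ⟨n, hn, hnC, hle⟩ := exists_ergodic_ge hclosed hface hprod hF
  exact ⟨n, hn, fun f hf => Mean.eq_of_content_eq (m := n.map Prod.snd) (funext hnC.2) hf, hle⟩

end Ergodic

/-! ### Van der Corput's inequality -/

section VanDerCorput

section Abstract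

variable {Z ι : Type*} {N : Mean Z} {M : Mean ι} {V : ι → Z → ℝ}

theorem le_energy_of_forall_le_energy_combination (hV : ∀ i z, |V i z| ≤ 1) {u : Z → ℝ}
    (hu : Bdd u) {c d s : ℝ} (hc : (M fun i => N fun z => u z * V i z) ≤ c) (hs : 0 ≤ s)
    (hs1 : s ≤ 1) (hd : ∀ i, d ≤ N fun z => ((1 - s) * u z + s * V i z) ^ 2) :
    d ≤ (1 - s) ^ 2 * (N fun z => u z ^ 2) + 2 * s * (1 - s) * c + s ^ 2 := by
  have hVb : Bdd fun p : ι × Z => V p.1 p.2 := ⟨1, fun p => hV _ _⟩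
  have : ∀ i, Bdd (V i) := fun i => ⟨1, hV i⟩
  have havg : d ≤ M fun i => N fun z => ((1 - s) * u z + s * V i z) ^ 2 := by
    rw [← M.const d]
    exact M.mono (.const _) (by fun_prop) hd
  have hexp : ∀ i, (N fun z => ((1 - s) * u z + s * V i z) ^ 2) =
      (1 - s) ^ 2 * (N fun z => u z ^ 2) + 2 * s * (1 - s) * (N fun z => u z * V i z) +
        s ^ 2 * N fun z => V i z ^ 2 := fun i => by
    simp_rw [← N.const_mul, ← N.add]
    exact congrArg N (funext fun z => by ring)
  have hV2 : (M fun i => N fun z => V i z ^ 2) ≤ 1 := by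
    refine (le_abs_self _).trans (M.abs_le fun i => N.abs_le fun z => ?_)
    rw [abs_pow]
    exact pow_le_one₀ (abs_nonneg _) (hV i z)
  simp_rw [hexp, M.add, M.const_mul, M.const] at havg
  nlinarith [mul_le_mul_of_nonneg_left hc (mul_nonneg hs (sub_nonneg.2 hs1)),
    mul_le_mul_of_nonneg_left hV2 (sq_nonneg s)]

theorem le_of_forall_le_convex_step {c d : ℝ}
    (h : ∀ s : ℝ, 0 ≤ s → s ≤ 1 → d ≤ (1 - s) ^ 2 * d + 2 * s * (1 - s) * c + s ^ 2) : d ≤ c := by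
  by_contra! hlt
  have hgap : 0 < d - c := sub_pos.2 hlt
  set b := |d - 2 * c + 1| + (d - c)
  have hb0 : 0 < b := add_pos_of_nonneg_of_pos (abs_nonneg _) hgap
  have hs : 0 < (d - c) / b := div_pos hgap hb0
  have hs1 : (d - c) / b ≤ 1 := (div_le_one hb0).2 (by linarith [abs_nonneg (d - 2 * c + 1)])
  have key := h _ hs.le hs1
  have hle : 2 * (d - c) ≤ (d - c) / b * (d - 2 * c + 1) := by
    refine le_of_mul_le_mul_left ?_ hs
    linarith
  have hsb : (d - c) / b * b = d - c := div_mul_cancel₀ _ hb0.ne'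
  nlinarith [mul_le_mul_of_nonneg_left (le_abs_self (d - 2 * c + 1)) hs.le, mul_pos hs hgap]

/-- Without a Fubini theorem the average of the `V i` cannot be formed pointwise. It is replaced by
convex combinations of the `V i` of almost minimal energy. -/
theorem sq_le_of_forall_correlation_le [Nonempty ι] (hV : ∀ i z, |V i z| ≤ 1) {F : Z → ℝ}
    (hF : ∀ z, |F z| ≤ 1) {L c : ℝ} (hL : ∀ i, (N fun z => F z * V i z) = L)
    (hc : ∀ j, (M fun i => N fun z => V j z * V i z) ≤ c) : L ^ 2 ≤ c := by
  have hVb : ∀ i, Bdd (V i) := fun i => ⟨1, hV i⟩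
  have : Bdd fun p : ι × Z => V p.1 p.2 := ⟨1, fun p => hV _ _⟩
  have : Bdd F := ⟨1, hF⟩
  let K : Set (Z → ℝ) :=
    {u | Bdd u ∧ (N fun z => F z * u z) = L ∧ (M fun i => N fun z => u z * V i z) ≤ c}
  let energies : Set ℝ := (fun u : Z → ℝ => N fun z => u z ^ 2) '' K
  have hne : energies.Nonempty :=
    let ⟨i⟩ := ‹Nonempty ι›; ⟨_, V i, ⟨hVb i, hL i, hc i⟩, rfl⟩
  have hlower : L ^ 2 ∈ lowerBounds energies := by
    rintro _ ⟨u, ⟨hu, huL, -⟩, rfl⟩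
    exact huL ▸ N.sq_mul_le hF hu
  have hconvex : ∀ u ∈ K, ∀ s : ℝ, 0 ≤ s → s ≤ 1 → ∀ i,
      (fun z => (1 - s) * u z + s * V i z) ∈ K := by
    rintro u ⟨hu, huL, huc⟩ s hs0 hs1 i
    refine ⟨by fun_prop, ?_, ?_⟩
    · simp_rw [mul_add, mul_left_comm (F _), N.add, N.const_mul, huL, hL]
      ring
    · simp_rw [add_mul, mul_assoc, N.add, N.const_mul, M.add, M.const_mul]
      nlinarith [hc i, mul_le_mul_of_nonneg_left huc (sub_nonneg.2 hs1)]
  refine (le_csInf hne hlower).trans (le_of_forall_le_convex_step fun s hs0 hs1 => ?_)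
  suffices h : sInf energies - 2 * s * (1 - s) * c - s ^ 2 ≤ (1 - s) ^ 2 * sInf energies by linarith
  rw [← smul_eq_mul ((1 - s) ^ 2), ← Real.sInf_smul_of_nonneg (sq_nonneg _)]
  refine le_csInf hne.smul_set ?_
  rintro _ ⟨_, ⟨u, hu, rfl⟩, rfl⟩
  have := le_energy_of_forall_le_energy_combination hV hu.1 hu.2.2 hs0 hs1 fun i =>
    csInf_le ⟨_, hlower⟩ ⟨_, hconvex u hu s hs0 hs1 i, rfl⟩
  simp only [smul_eq_mul]
  linarith

end Abstract

variable {G X : Type*} [Group G]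

/-- Two-sided invariance of a mean on a group. -/
structure Mean.IsBiInvariant (M : Mean G) : Prop where
  left : ∀ (g : G) (f : G → ℝ), Bdd f → (M fun y => f (g * y)) = M f
  right : ∀ (g : G) (f : G → ℝ), Bdd f → (M fun y => f (y * g)) = M f

namespace Mean.IsBiInvariant

variable {M : Mean G}

theorem left_right (hM : M.IsBiInvariant) (l r : G) {f : G → ℝ} (hf : Bdd f) :
    (M fun y => f (l * y * r)) = M f :=
  (hM.left l (fun y => f (y * r)) (by fun_prop)).trans (hM.right r f hf)

theorem inv (hM : M.IsBiInvariant) : (M.map (·⁻¹)).IsBiInvariant where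
  left g f hf := by
    simp_rw [map_apply, ← hM.right g⁻¹ (fun y => f y⁻¹) (by fun_prop), mul_inv_rev, inv_inv]
  right g f hf := by
    simp_rw [map_apply, ← hM.left g⁻¹ (fun y => f y⁻¹) (by fun_prop), mul_inv_rev, inv_inv]

theorem vanDerCorput (hM : M.IsBiInvariant) (m : Mean X) {v : G → X → ℝ}
    (hv : ∀ y x, |v y x| ≤ 1) {f : X → ℝ} (hf : ∀ x, |f x| ≤ 1) :
    (M fun y => m fun x => f x * v y x) ^ 2 ≤
      M fun h => M fun y => m fun x => v (h * y) x * v y x := by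
  have hvb : Bdd fun p : G × X => v p.1 p.2 := ⟨1, fun p => hv _ _⟩
  have hfb : Bdd f := ⟨1, hf⟩
  refine sq_le_of_forall_correlation_le (N := M.prod m) (M := M)
    (V := fun h z => v (h * z.1) z.2) (F := fun z => f z.2) (fun h z => hv _ _) (fun z => hf _)
    (fun h => hM.left h (fun y => m fun x => f x * v y x) (by fun_prop)) fun k => le_of_eq ?_
  have hshift : ∀ h, (M fun y => m fun x => v (k * y) x * v (h * y) x) =
      M fun y => m fun x => v (h * k⁻¹ * y) x * v y x := fun h => by
    rw [← hM.left k fun y => m fun x => v (h * k⁻¹ * y) x * v y x]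
    · simp_rw [mul_assoc, inv_mul_cancel_left, mul_comm]
    · fun_prop
  simp_rw [prod_apply, hshift]
  exact hM.right k⁻¹ (fun h => M fun y => m fun x => v (h * y) x * v y x) (by fun_prop)

end Mean.IsBiInvariant

end VanDerCorput

theorem ergodic_average {G X Γ : Type*} [Group G] [Group Γ] [MulAction Γ X] {M : Mean G}
    (hM : M.IsBiInvariant) {m : Mean X} (hm : m.IsErgodic Γ) {H : Set X} {σ : G → Γ}
    (hσ : ∀ g : Γ, ∃ l r : G, ∀ y x, σ y • g⁻¹ • x ∈ H ↔ σ (l * y * r) • x ∈ H) (B : Set X) :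
    (M fun y => m.content (B ∩ (σ y • ·) ⁻¹' H)) = m.content B * m.content H := by
  let ℓ : Set X → ℝ := fun B => M fun y => m.content (B ∩ (σ y • ·) ⁻¹' H)
  have hb : ∀ B, Bdd fun y => m.content (B ∩ (σ y • ·) ⁻¹' H) := fun B =>
    ⟨1, fun y => (abs_of_nonneg (m.isContent.nonneg _)).trans_le (m.content_le_one _)⟩
  have hℓ : IsContent ℓ :=
    { nonneg := fun B => M.nonneg (hb B) fun y => m.isContent.nonneg _
      union := fun A B h => by
        simp only [ℓ, Set.union_inter_distrib_right, ← M.add]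
        exact congrArg M (funext fun y => m.isContent.union _ _
          (h.mono Set.inter_subset_left Set.inter_subset_left)) }
  have hle : ∀ B, ℓ B ≤ m.content B := fun B => by
    rw [← M.const (m.content B)]
    exact M.mono (hb B) (.const _) fun y => m.isContent.mono Set.inter_subset_left
  have huniv : ℓ Set.univ = m.content H := by
    simp only [ℓ, Set.univ_inter, hm.1.preimage_smul, M.const]
  have hinv : ∀ (g : Γ) (B : Set X), ℓ ((g • ·) ⁻¹' B) = ℓ B := fun g B => by
    obtain ⟨l, r, hlr⟩ := hσ g
    refine (congrArg M (funext fun y => ?_)).trans (hM.left_right l r (hb B))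
    rw [← hm.1.preimage_smul g (B ∩ _)]
    congr 1
    ext x
    have := hlr y (g • x)
    rw [inv_smul_smul] at this
    simp [this]
  rw [← huniv, mul_comm]
  exact hm.eq_mul_of_le hℓ hinv hle B

/-! ### Corners -/

section Corners

/-- A `[-1, 1]`-valued function taking finitely many values. -/
structure IsUnitSimple {X : Type*} (f : X → ℝ) : Prop where
  finite_range : (Set.range f).Finite
  abs_le_one : ∀ x, |f x| ≤ 1

namespace IsUnitSimple

variable {X Y : Type*} {f g : X → ℝ}

@[fun_prop]
theorem bdd (hf : IsUnitSimple f) : Bdd f := ⟨1, hf.abs_le_one⟩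

theorem mul (hf : IsUnitSimple f) (hg : IsUnitSimple g) : IsUnitSimple fun x => f x * g x where
  finite_range := (hf.finite_range.image2 (· * ·) hg.finite_range).subset <| by
    rintro _ ⟨x, rfl⟩
    exact ⟨_, ⟨x, rfl⟩, _, ⟨x, rfl⟩, rfl⟩
  abs_le_one x := by
    rw [abs_mul]
    exact mul_le_one₀ (hf.abs_le_one x) (abs_nonneg _) (hg.abs_le_one x)

theorem comp (hf : IsUnitSimple f) (φ : Y → X) : IsUnitSimple fun y => f (φ y) where
  finite_range := hf.finite_range.subset (Set.range_comp_subset_range φ f)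
  abs_le_one y := hf.abs_le_one (φ y)

theorem indicator (B : Set X) : IsUnitSimple 𝟙B where
  finite_range := finite_range_indicator_one B
  abs_le_one := abs_indicator_one_le_one B

end IsUnitSimple

variable {G X : Type*} [Group G]

/-- The group elements taking a point `x` to the vertices `x`, `(1, y) • x`, `(y, y) • x` of a
corner. -/
def vertex : Fin 3 → G → G × G := ![fun _ => 1, fun y => (1, y), fun y => (y, y)]

/-- The `j`-th edge direction of corners: the edge from vertex `j + 1` to vertex `j + 2`. -/
def edge : Fin 3 → G → G × G := ![fun y => (y, 1), fun y => (y, y), fun y => (1, y)]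

variable [MulAction (G × G) X]

/-- The `i`-th vertex of the corner of step `p.1` at `p.2`. -/
def corner (i : Fin 3) (p : G × X) : X := vertex i p.1 • p.2

/-- Invariance of a function under translations in the `j`-th edge direction. -/
def EdgeInvariant (G : Type*) [Group G] [MulAction (G × G) X] {ι : Type*} (j : Fin 3) (α : X → ι) :
    Prop :=
  ∀ (y : G) (x : X), α (edge j y • x) = α x

theorem EdgeInvariant.corner_eq {ι : Type*} {j : Fin 3} {α : X → ι} (h : EdgeInvariant G j α)
    (p : G × X) : α (corner (j + 1) p) = α (corner (j + 2) p) := by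
  obtain ⟨y, x⟩ := p
  fin_cases j
  · simpa [corner, vertex, edge, smul_smul] using (h y (((1 : G), y) • x)).symm
  · simpa [corner, vertex, edge, smul_smul] using h y x
  · simpa [corner, vertex, edge, smul_smul] using (h y x).symm

/-- The trilinear form averaging a product over the vertices of corners. -/
noncomputable def tri (M : Mean G) (m : Mean X) (f : Fin 3 → X → ℝ) : ℝ :=
  M.prod m fun p => ∏ i, f i (corner i p)

variable {M : Mean G} {m : Mean X} {f : Fin 3 → X → ℝ}

theorem tri_eq (M : Mean G) (m : Mean X) (f : Fin 3 → X → ℝ) :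
    tri M m f = M fun y => m fun x =>
      f 0 x * (f 1 (((1, y) : G × G) • x) * f 2 (((y, y) : G × G) • x)) := by
  simp [tri, Mean.prod_apply, Fin.prod_univ_three, corner, vertex, mul_assoc]

theorem isInvariant_map_prod (hM : M.IsBiInvariant) {φ : G × G → G × G}
    (hφ : ∀ g : G × G, ∃ l r l' r' : G, ∀ h y, g * φ (h, y) = φ (l * h * r, l' * y * r')) :
    ((M.prod M).map φ).IsInvariant (G × G) := fun g f hf => by
  obtain ⟨l, r, l', r', h⟩ := hφ g
  simp only [Mean.map_apply, Mean.prod_apply, smul_eq_mul, h]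
  rw [← hM.left_right l r (f := fun h => M fun y => f (φ (h, y))) (by fun_prop)]
  exact congrArg M (funext fun h => hM.left_right l' r' (f := fun y => f (φ (_, y))) (by fun_prop))

/-- An ergodic extension of `m` by `G × G` in which the `i`-th function `k` has correlation at
least `c` with a product of functions constant along the edge directions at the `i`-th vertex. -/
def HasCorrelation (G : Type*) [Group G] [MulAction (G × G) X] (m : Mean X) (i : Fin 3)
    (k : X → ℝ) (c : ℝ) : Prop :=
  ∃ n : Mean ((G × G) × X), n.IsErgodic (G × G) ∧
    (∀ f : X → ℝ, Bdd f → (n fun z => f z.2) = m f) ∧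
    ∃ a b : (G × G) × X → ℝ, IsUnitSimple a ∧ IsUnitSimple b ∧
      EdgeInvariant G (i + 1) a ∧ EdgeInvariant G (i + 2) b ∧
      c ≤ n fun z => k z.2 * (a z * b z)

theorem hasCorrelation_of_le (hM : M.IsBiInvariant) (hm : m.IsErgodic (G × G)) {k : X → ℝ}
    (hk : IsUnitSimple k) {c : ℝ} {i : Fin 3} (φ : G × G → G × G)
    (hφ : ∀ g : G × G, ∃ l r l' r' : G, ∀ h y, g * φ (h, y) = φ (l * h * r, l' * y * r'))
    {a b : (G × G) × X → ℝ} (ha : IsUnitSimple a) (hb : IsUnitSimple b)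
    (ha_inv : EdgeInvariant G (i + 1) a) (hb_inv : EdgeInvariant G (i + 2) b)
    (hle : c ≤ M fun h => M fun y => m fun x => k x * (a (φ (h, y), x) * b (φ (h, y), x))) :
    HasCorrelation G m i k c := by
  obtain ⟨n, hn, hsnd, hge⟩ := exists_ergodic_extension (isInvariant_map_prod hM hφ) hm
    ((hk.comp Prod.snd).mul (ha.mul hb)).finite_range
  exact ⟨n, hn, hsnd, a, b, ha, hb, ha_inv, hb_inv, hle.trans hge⟩

theorem hasCorrelation_zero (hM : M.IsBiInvariant) (hm : m.IsErgodic (G × G))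
    (hf : ∀ i, IsUnitSimple (f i)) : HasCorrelation G m 0 (f 0) (tri M m f ^ 2) := by
  have hb := fun i => (hf i).bdd
  refine hasCorrelation_of_le hM.inv hm (hf 0) (fun p => (p.1⁻¹, p.2))
    (fun ⟨t, s⟩ => ⟨1, t⁻¹, s, 1, fun h y => by simp⟩)
    ((hf 0).comp fun z => ((z.1.1⁻¹, z.1.1⁻¹) : G × G) • z.2)
    (((hf 1).comp fun z => ((1, z.1.2⁻¹) : G × G) • z.2).mul
      ((hf 1).comp fun z => ((z.1.1⁻¹, z.1.2⁻¹) : G × G) • z.2)) ?_ ?_ ?_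
  · rintro y ⟨⟨p, q⟩, x⟩
    simp [edge, smul_smul, mul_assoc]
  · rintro y ⟨⟨p, q⟩, x⟩
    simp [edge, smul_smul, mul_assoc]
  -- Translating by `(y, y)` and inverting `y` moves the eliminated function to the base point.
  have htri : tri M m f = M.map (·⁻¹) fun y => m fun x =>
      f 2 x * (f 0 (((y, y) : G × G) • x) * f 1 (((y, 1) : G × G) • x)) := by
    rw [tri_eq, Mean.map_apply]
    refine congrArg M (funext fun y => ?_)
    refine Eq.trans ?_ (hm.isInvariant ((y, y) : G × G) _ (by fun_prop))
    simp only [smul_smul, Prod.mk_mul_mk, one_mul, inv_mul_cancel, ← Prod.one_eq_mk, one_smul]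
    exact congrArg m (funext fun x => by ring)
  rw [htri]
  refine (hM.inv.vanDerCorput m (v := fun y x => f 0 (((y, y) : G × G) • x) *
    f 1 (((y, 1) : G × G) • x)) (fun y x => (((hf 0).comp fun x => _).mul
      ((hf 1).comp fun x => _)).abs_le_one x) (hf 2).abs_le_one).trans_eq ?_
  refine congrArg _ (funext fun h => congrArg _ (funext fun y => ?_))
  refine Eq.trans ?_ (hm.isInvariant ((y, y) : G × G) _ (by fun_prop))
  simp only [smul_smul, Prod.mk_mul_mk, inv_inv, one_mul, inv_mul_cancel]
  exact congrArg m (funext fun x => by ring)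

theorem hasCorrelation_one (hM : M.IsBiInvariant) (hm : m.IsErgodic (G × G))
    (hf : ∀ i, IsUnitSimple (f i)) : HasCorrelation G m 1 (f 1) (tri M m f ^ 2) := by
  have hb := fun i => (hf i).bdd
  refine hasCorrelation_of_le hM hm (hf 1) (fun p => (p.2⁻¹, p.1⁻¹))
    (fun ⟨t, s⟩ => ⟨1, s⁻¹, 1, t⁻¹, fun h y => by simp⟩)
    ((hf 1).comp fun z => ((1, z.1.2⁻¹) : G × G) • z.2)
    (((hf 2).comp fun z => ((z.1.1⁻¹, 1) : G × G) • z.2).mul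
      ((hf 2).comp fun z => ((z.1.2⁻¹ * z.1.1⁻¹, z.1.2⁻¹) : G × G) • z.2)) ?_ ?_ ?_
  · rintro y ⟨⟨p, q⟩, x⟩
    simp [edge, smul_smul]
  · rintro y ⟨⟨p, q⟩, x⟩
    simp [edge, smul_smul, mul_assoc]
  rw [tri_eq]
  refine (hM.vanDerCorput m (v := fun y x => f 1 (((1, y) : G × G) • x) *
    f 2 (((y, y) : G × G) • x)) (fun y x => (((hf 1).comp fun x => _).mul
      ((hf 2).comp fun x => _)).abs_le_one x) (hf 0).abs_le_one).trans_eq ?_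
  refine congrArg _ (funext fun h => congrArg _ (funext fun y => ?_))
  refine Eq.trans ?_ (hm.isInvariant ((1, y) : G × G) _ (by fun_prop))
  simp only [smul_smul, Prod.mk_mul_mk, inv_inv, one_mul, mul_one]
  exact congrArg m (funext fun x => by ring)

theorem hasCorrelation_two (hM : M.IsBiInvariant) (hm : m.IsErgodic (G × G))
    (hf : ∀ i, IsUnitSimple (f i)) : HasCorrelation G m 2 (f 2) (tri M m f ^ 2) := by
  have hb := fun i => (hf i).bdd
  refine hasCorrelation_of_le hM hm (hf 2) (fun p => (p.2, p.1⁻¹))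
    (fun ⟨t, s⟩ => ⟨1, s⁻¹, t, 1, fun h y => by simp⟩)
    (((hf 1).comp fun z => ((z.1.1⁻¹, 1) : G × G) • z.2).mul
      ((hf 1).comp fun z => ((z.1.1⁻¹, z.1.2⁻¹) : G × G) • z.2))
    ((hf 2).comp fun z => ((z.1.2⁻¹, z.1.2⁻¹) : G × G) • z.2) ?_ ?_ ?_
  · rintro y ⟨⟨p, q⟩, x⟩
    simp [edge, smul_smul, mul_assoc]
  · rintro y ⟨⟨p, q⟩, x⟩
    simp [edge, smul_smul, mul_assoc]
  rw [tri_eq]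
  refine (hM.vanDerCorput m (v := fun y x => f 1 (((1, y) : G × G) • x) *
    f 2 (((y, y) : G × G) • x)) (fun y x => (((hf 1).comp fun x => _).mul
      ((hf 2).comp fun x => _)).abs_le_one x) (hf 0).abs_le_one).trans_eq ?_
  refine congrArg _ (funext fun h => congrArg _ (funext fun y => ?_))
  refine Eq.trans ?_ (hm.isInvariant ((y, y) : G × G) _ (by fun_prop))
  simp only [smul_smul, Prod.mk_mul_mk, inv_inv, one_mul, inv_mul_cancel]
  exact congrArg m (funext fun x => by ring)

theorem hasCorrelation_tri (hM : M.IsBiInvariant) (hm : m.IsErgodic (G × G))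
    (hf : ∀ i, IsUnitSimple (f i)) (i : Fin 3) : HasCorrelation G m i (f i) (tri M m f ^ 2) := by
  fin_cases i
  · exact hasCorrelation_zero hM hm hf
  · exact hasCorrelation_one hM hm hf
  · exact hasCorrelation_two hM hm hf

end Corners

/-! ### Structured approximation -/

universe u

/-- An ergodic mean-preserving action of `G × G` with a distinguished set. -/
structure System (G : Type u) [Group G] where
  /-- The underlying space. -/
  X : Type u
  [action : MulAction (G × G) X]
  /-- The ergodic mean. -/
  m : Mean X
  ergodic : m.IsErgodic (G × G)
  /-- The distinguished set. -/
  A : Set X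

attribute [instance] System.action

variable {G : Type u} [Group G] {𝒳 𝒴 𝒵 : System G}

/-- A factor map exhibiting `𝒴` as an extension of `𝒳`. -/
structure Extension (𝒴 𝒳 : System G) where
  /-- The factor map. -/
  π : 𝒴.X → 𝒳.X
  map_smul : ∀ (g : G × G) (y : 𝒴.X), π (g • y) = g • π y
  mean_comp : ∀ f : 𝒳.X → ℝ, Bdd f → (𝒴.m fun y => f (π y)) = 𝒳.m f
  preimage : π ⁻¹' 𝒳.A = 𝒴.A

namespace Extension

/-- The identity extension. -/
def refl (𝒳 : System G) : Extension 𝒳 𝒳 := ⟨id, fun _ _ => rfl, fun _ _ => rfl, rfl⟩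

/-- The composition of extensions. -/
def trans (e : Extension 𝒵 𝒴) (e' : Extension 𝒴 𝒳) : Extension 𝒵 𝒳 where
  π z := e'.π (e.π z)
  map_smul g z := by rw [e.map_smul, e'.map_smul]
  mean_comp f hf := by rw [e.mean_comp (fun y => f (e'.π y)) (hf.comp _), e'.mean_comp f hf]
  preimage := by rw [← e.preimage, ← e'.preimage]; rfl

theorem content_preimage (e : Extension 𝒴 𝒳) (B : Set 𝒳.X) :
    𝒴.m.content (e.π ⁻¹' B) = 𝒳.m.content B :=
  e.mean_comp 𝟙B (by fun_prop)

theorem indicator_comp (e : Extension 𝒴 𝒳) (y : 𝒴.X) : 𝟙(𝒳.A) (e.π y) = 𝟙(𝒴.A) y := by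
  rw [← e.preimage]
  rfl

theorem tri_eq (e : Extension 𝒴 𝒳) (M : Mean G) :
    (tri M 𝒴.m fun _ => 𝟙(𝒴.A)) = tri M 𝒳.m fun _ => 𝟙(𝒳.A) := by
  refine congrArg M (funext fun y => ?_)
  rw [← e.mean_comp _ (by unfold corner; fun_prop)]
  simp only [corner, ← e.map_smul, e.indicator_comp]

end Extension

/-- Three finite labellings, the `j`-th being constant along the `j`-th edge direction, with
functions of pairs of labels; these encode approximations to the distinguished set, which at the
`i`-th vertex of a corner depend only on the labels of the two edges through that vertex. -/
structure Labelling (𝒳 : System G) where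
  /-- The type of labels. -/
  ι : Type
  [finite : Finite ι]
  /-- The three labellings. -/
  label : Fin 3 → 𝒳.X → ι
  invariant : ∀ j, EdgeInvariant G j (label j)
  /-- The functions of pairs of labels. -/
  value : Fin 3 → ι → ι → ℝ

attribute [instance] Labelling.finite

namespace Labelling

/-- The approximation to the distinguished set at the `i`-th vertex. -/
def approx (P : Labelling 𝒳) (i : Fin 3) (x : 𝒳.X) : ℝ :=
  P.value i (P.label (i + 1) x) (P.label (i + 2) x)

/-- The error of the approximation at the `i`-th vertex. -/
noncomputable def error (P : Labelling 𝒳) (i : Fin 3) (x : 𝒳.X) : ℝ := 𝟙(𝒳.A) x - P.approx i x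

/-- The total squared error of the approximations. -/
noncomputable def energy (P : Labelling 𝒳) : ℝ := ∑ i, 𝒳.m fun x => P.error i x ^ 2

theorem finite_range_approx (P : Labelling 𝒳) (i : Fin 3) : (Set.range (P.approx i)).Finite := by
  refine (Set.finite_range fun p : P.ι × P.ι => P.value i p.1 p.2).subset ?_
  rintro _ ⟨x, rfl⟩
  exact ⟨(P.label (i + 1) x, P.label (i + 2) x), rfl⟩

@[fun_prop]
theorem bdd_approx (P : Labelling 𝒳) (i : Fin 3) : Bdd (P.approx i) :=
  .of_finite_range (P.finite_range_approx i)

@[fun_prop]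
theorem bdd_error (P : Labelling 𝒳) (i : Fin 3) : Bdd (P.error i) :=
  (bdd_indicator _).sub (P.bdd_approx i)

theorem energy_nonneg (P : Labelling 𝒳) : 0 ≤ P.energy :=
  Finset.sum_nonneg fun _ _ => 𝒳.m.nonneg (by fun_prop) fun _ => sq_nonneg _

/-- The pull-back of a labelling to an extension. -/
def pull (P : Labelling 𝒳) (e : Extension 𝒴 𝒳) : Labelling 𝒴 where
  ι := P.ι
  label j y := P.label j (e.π y)
  invariant j g y := (congrArg (P.label j) (e.map_smul _ y)).trans (P.invariant j g _)
  value := P.value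

theorem approx_pull (P : Labelling 𝒳) (e : Extension 𝒴 𝒳) (i : Fin 3) (y : 𝒴.X) :
    (P.pull e).approx i y = P.approx i (e.π y) := rfl

theorem error_pull (P : Labelling 𝒳) (e : Extension 𝒴 𝒳) (i : Fin 3) (y : 𝒴.X) :
    (P.pull e).error i y = P.error i (e.π y) := by
  rw [error, error, e.indicator_comp, approx_pull]

theorem energy_pull (P : Labelling 𝒳) (e : Extension 𝒴 𝒳) : (P.pull e).energy = P.energy := by
  simp only [energy, error_pull]
  exact Finset.sum_congr rfl fun i _ => e.mean_comp (fun x => P.error i x ^ 2) (by fun_prop)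

/-- The labelling whose approximations are linear combinations of those of `P` and `Q`. -/
def combination (s t : ℝ) (P Q : Labelling 𝒳) : Labelling 𝒳 where
  ι := P.ι × Q.ι
  label j x := (P.label j x, Q.label j x)
  invariant j g x := Prod.ext (P.invariant j g x) (Q.invariant j g x)
  value i p q := s * P.value i p.1 q.1 + t * Q.value i p.2 q.2

theorem approx_combination (s t : ℝ) (P Q : Labelling 𝒳) (i : Fin 3) (x : 𝒳.X) :
    (combination s t P Q).approx i x = s * P.approx i x + t * Q.approx i x := rfl

/-- The labelling whose approximations are those of `P` followed by the functions `ψ i`. -/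
def map (P : Labelling 𝒳) (ψ : Fin 3 → ℝ → ℝ) : Labelling 𝒳 where
  ι := P.ι
  label := P.label
  invariant := P.invariant
  value i p q := ψ i (P.value i p q)

theorem approx_map (P : Labelling 𝒳) (ψ : Fin 3 → ℝ → ℝ) (i : Fin 3) (x : 𝒳.X) :
    (P.map ψ).approx i x = ψ i (P.approx i x) := rfl

theorem exists_approx_mem_Icc (P : Labelling 𝒳) :
    ∃ Q : Labelling 𝒳, (∀ i x, Q.approx i x ∈ Set.Icc 0 1) ∧ Q.energy ≤ P.energy := by
  let clip := fun t : ℝ => (Set.projIcc 0 1 zero_le_one t : ℝ)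
  have hclip : ∀ a ∈ Set.Icc (0 : ℝ) 1, ∀ t, |a - clip t| ≤ |a - t| := fun a ha t => by
    simpa only [clip, Set.projIcc_of_mem zero_le_one ha] using
      Set.abs_projIcc_sub_projIcc zero_le_one (c := a) (d := t)
  refine ⟨P.map fun _ => clip, fun i x => Subtype.coe_prop _, Finset.sum_le_sum fun i _ =>
    𝒳.m.mono (by fun_prop) (by fun_prop) fun x => sq_le_sq.2 ?_⟩
  exact hclip _ ⟨indicator_one_nonneg _ x, indicator_one_le_one _ x⟩ _

theorem exists_approx_eq_single (i : Fin 3) {a b : 𝒳.X → ℝ} (ha : (Set.range a).Finite)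
    (hb : (Set.range b).Finite) (ha_inv : EdgeInvariant G (i + 1) a)
    (hb_inv : EdgeInvariant G (i + 2) b) :
    ∃ Q : Labelling 𝒳, Q.approx = Pi.single i fun x => a x * b x := by
  let α : Fin 3 → 𝒳.X → ℝ := Pi.single (i + 1) a + Pi.single (i + 2) b
  have hα₁ : α (i + 1) = a := by fin_cases i <;> simp [α]
  have hα₂ : α (i + 2) = b := by fin_cases i <;> simp [α]
  have hα₀ : α i = 0 := by fin_cases i <;> simp [α]
  have hcover : ∀ i j : Fin 3, j = i ∨ j = i + 1 ∨ j = i + 2 := by decide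
  have hα_inv : ∀ j, EdgeInvariant G j (α j) := fun j => by
    rcases hcover i j with rfl | rfl | rfl
    · exact fun _ _ => by rw [hα₀]; rfl
    · rwa [hα₁]
    · rwa [hα₂]
  have hα_fin : (⋃ j, Set.range (α j)).Finite := Set.finite_iUnion fun j => by
    rcases hcover i j with rfl | rfl | rfl
    · rw [hα₀]
      exact (Set.finite_singleton 0).subset (Set.range_subset_iff.2 fun _ => rfl)
    · rwa [hα₁]
    · rwa [hα₂]
  have := hα_fin.to_subtype
  refine ⟨⟨↑(⋃ j, Set.range (α j)), fun j x => ⟨α j x, Set.mem_iUnion.2 ⟨j, x, rfl⟩⟩,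
    fun j y x => Subtype.ext (hα_inv j y x), fun j p q => if j = i then p * q else 0⟩, ?_⟩
  ext j x
  by_cases hj : j = i
  · subst hj
    simp [approx, hα₁, hα₂]
  · simp [approx, hj]

/-- The labelling is optimal up to `ε` among all labellings of extensions. -/
def IsOptimal (P : Labelling 𝒳) (ε : ℝ) : Prop :=
  ∀ (𝒵 : System G), Extension 𝒵 𝒳 → ∀ Q : Labelling 𝒵, P.energy ≤ Q.energy + ε

theorem exists_isOptimal (𝒳 : System G) {ε : ℝ} (hε : 0 < ε) :
    ∃ (𝒴 : System G) (_ : Extension 𝒴 𝒳) (P : Labelling 𝒴), P.IsOptimal ε ∧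
      ∀ i x, P.approx i x ∈ Set.Icc 0 1 := by
  let S : Set ℝ := {r | ∃ (𝒴 : System G) (_ : Extension 𝒴 𝒳) (P : Labelling 𝒴), P.energy = r}
  have hne : S.Nonempty :=
    ⟨_, 𝒳, .refl 𝒳, ⟨Unit, fun _ _ => (), fun _ _ _ => rfl, fun _ _ _ => 0⟩, rfl⟩
  have hbdd : BddBelow S := ⟨0, by rintro _ ⟨_, _, P, rfl⟩; exact P.energy_nonneg⟩
  obtain ⟨_, ⟨𝒴, e, P, rfl⟩, hP⟩ := Real.lt_sInf_add_pos hne hε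
  obtain ⟨Q, hQ, hQP⟩ := P.exists_approx_mem_Icc
  refine ⟨𝒴, e, Q, fun 𝒵 e' R => ?_, hQ⟩
  have := csInf_le hbdd ⟨𝒵, e'.trans e, R, rfl⟩
  linarith

namespace IsOptimal

variable {P : Labelling 𝒳}

theorem mono {ε ε' : ℝ} (h : P.IsOptimal ε) (hε : ε ≤ ε') : P.IsOptimal ε' :=
  fun 𝒵 e Q => (h 𝒵 e Q).trans (by gcongr)

/-- An approximation correlating with the error could be used to decrease the energy. -/
theorem sum_error_mul_le {t : ℝ} (ht : 0 < t) (h : P.IsOptimal (t ^ 2)) (e : Extension 𝒴 𝒳)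
    (Q : Labelling 𝒴) (hQ : ∑ i, (𝒴.m fun y => Q.approx i y ^ 2) ≤ 1) :
    ∑ i, (𝒴.m fun y => P.error i (e.π y) * Q.approx i y) ≤ t := by
  have hopt := h 𝒴 e (combination 1 t (P.pull e) Q)
  have herror : ∀ i y, (combination 1 t (P.pull e) Q).error i y ^ 2 = (P.pull e).error i y ^ 2 -
      2 * t * (P.error i (e.π y) * Q.approx i y) + t ^ 2 * Q.approx i y ^ 2 := fun i y => by
    rw [← error_pull, error, error, approx_combination]
    ring
  have henergy : (combination 1 t (P.pull e) Q).energy = P.energy -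
      2 * t * ∑ i, (𝒴.m fun y => P.error i (e.π y) * Q.approx i y) +
        t ^ 2 * ∑ i, 𝒴.m fun y => Q.approx i y ^ 2 := by
    rw [← P.energy_pull e]
    simp_rw [energy, herror, Mean.add, Mean.sub, Mean.const_mul, Finset.sum_add_distrib,
      Finset.sum_sub_distrib, Finset.mul_sum]
  refine le_of_mul_le_mul_left (a := t) ?_ ht
  nlinarith [mul_le_mul_of_nonneg_left hQ (sq_nonneg t)]

theorem mean_error_mul_le {t : ℝ} (ht : 0 < t) (h : P.IsOptimal (t ^ 2)) (e : Extension 𝒴 𝒳)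
    (Q : Labelling 𝒴) {i : Fin 3} {w : 𝒴.X → ℝ} (hQ : Q.approx = Pi.single i w)
    (hw : ∀ y, |w y| ≤ 1) : (𝒴.m fun y => P.error i (e.π y) * w y) ≤ t := by
  have happrox : ∀ j, j ≠ i → Q.approx j = 0 := fun j hj => by rw [hQ, Pi.single_eq_of_ne hj]
  have happrox_i : Q.approx i = w := by rw [hQ, Pi.single_eq_same]
  have := h.sum_error_mul_le ht e Q ?_
  · rwa [Fintype.sum_eq_single i fun j hj => by simp [happrox j hj, Mean.const], happrox_i] at this
  rw [Fintype.sum_eq_single i fun j hj => by simp [happrox j hj, Mean.const], happrox_i]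
  exact (le_abs_self _).trans (𝒴.m.abs_le fun y => by
    rw [abs_pow]
    exact pow_le_one₀ (abs_nonneg _) (hw y))

theorem abs_tri_le {t : ℝ} (ht : 0 < t) (h : P.IsOptimal (t ^ 4)) {M : Mean G}
    (hM : M.IsBiInvariant) {f : Fin 3 → 𝒳.X → ℝ} (hf : ∀ i, IsUnitSimple (f i)) {i : Fin 3}
    (hi : f i = P.error i) : |tri M 𝒳.m f| ≤ t := by
  obtain ⟨n, hn, hsnd, a, b, ha, hb, ha_inv, hb_inv, hle⟩ :=
    hasCorrelation_tri hM 𝒳.ergodic hf i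
  let 𝒴 : System G := ⟨(G × G) × 𝒳.X, n, hn, Prod.snd ⁻¹' 𝒳.A⟩
  let e : Extension 𝒴 𝒳 := ⟨Prod.snd, fun _ _ => rfl, hsnd, rfl⟩
  obtain ⟨Q, hQ⟩ := exists_approx_eq_single (𝒳 := 𝒴) i ha.finite_range hb.finite_range ha_inv hb_inv
  refine abs_le_of_sq_le_sq (hle.trans ?_) ht.le
  rw [hi]
  rw [show t ^ 4 = (t ^ 2) ^ 2 by ring] at h
  exact h.mean_error_mul_le (by positivity) e Q hQ (ha.mul hb).abs_le_one

theorem content_inter_approx_lt_le {t : ℝ} (ht : 0 < t) (h : P.IsOptimal (t ^ 2))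
    (hP : ∀ i x, 0 ≤ P.approx i x) {l : ℝ} (hl : 0 ≤ l) (i : Fin 3) :
    𝒳.m.content (𝒳.A ∩ {x | P.approx i x < l}) ≤ t + l := by
  set low := {x | P.approx i x < l}
  have hQ : (P.map (Pi.single i 𝟙(Set.Iio l))).approx = Pi.single i 𝟙low := by
    ext j x
    by_cases hj : j = i
    · subst hj
      simp [approx_map, Set.indicator_apply, low]
    · simp [approx_map, hj]
  have hle : 𝒳.m.content (𝒳.A ∩ low) ≤ 𝒳.m fun x => P.error i x * 𝟙low x + l := by
    refine 𝒳.m.mono (by fun_prop) (by fun_prop) fun x => ?_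
    have := hP i x
    by_cases hA : x ∈ 𝒳.A <;> by_cases hlow : P.approx i x < l <;>
      simp [error, low, hA, hlow] <;> linarith
  rw [Mean.add, Mean.const] at hle
  have := h.mean_error_mul_le ht (.refl 𝒳) _ hQ (abs_indicator_one_le_one low)
  exact hle.trans (by gcongr; exact this)

/-- By the parallelogram law, two nearly optimal labellings are close to each other. -/
theorem mean_sq_sub_le {η : ℝ} (h : P.IsOptimal η) (e : Extension 𝒴 𝒳) {P' : Labelling 𝒴}
    (h' : P'.IsOptimal η) (i : Fin 3) :
    (𝒴.m fun y => (P'.approx i y - P.approx i (e.π y)) ^ 2) ≤ 6 * η := by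
  have hopt := h 𝒴 e P'
  have hopt' := h' 𝒴 (.refl 𝒴) (combination 2⁻¹ 2⁻¹ (P.pull e) P')
  have herror : ∀ j y, (combination 2⁻¹ 2⁻¹ (P.pull e) P').error j y ^ 2 =
      2⁻¹ * (P.pull e).error j y ^ 2 + 2⁻¹ * P'.error j y ^ 2 -
        4⁻¹ * (P'.approx j y - P.approx j (e.π y)) ^ 2 := fun j y => by
    simp only [error, approx_combination, approx_pull]
    ring
  have henergy : (combination 2⁻¹ 2⁻¹ (P.pull e) P').energy = 2⁻¹ * P.energy + 2⁻¹ * P'.energy -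
      4⁻¹ * ∑ j, 𝒴.m fun y => (P'.approx j y - P.approx j (e.π y)) ^ 2 := by
    rw [← P.energy_pull e]
    simp_rw [energy, herror, Mean.sub, Mean.add, Mean.const_mul, Finset.sum_sub_distrib,
      Finset.sum_add_distrib, Finset.mul_sum]
  have hsingle := Finset.single_le_sum
    (f := fun j => 𝒴.m fun y => (P'.approx j y - P.approx j (e.π y)) ^ 2)
    (fun j _ => 𝒴.m.nonneg (by fun_prop) fun _ => sq_nonneg _) (Finset.mem_univ i)
  linarith

theorem sq_mul_content_le {η : ℝ} (h : P.IsOptimal η) (e : Extension 𝒴 𝒳) {P' : Labelling 𝒴}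
    (h' : P'.IsOptimal η) (i : Fin 3) {s : ℝ} (hs : 0 ≤ s) :
    s ^ 2 * 𝒴.m.content {y | s ≤ |P'.approx i y - P.approx i (e.π y)|} ≤ 6 * η := by
  refine (𝒴.m.mul_content_le (by fun_prop) (fun _ => sq_nonneg _) fun y hy => ?_).trans
    (h.mean_sq_sub_le e h' i)
  rw [← sq_abs (_ - _)]
  exact pow_le_pow_left₀ hs hy 2

end IsOptimal

end Labelling

/-! ### Counting corners in a cell -/

section Cell

variable {G X : Type*} [Group G] [MulAction (G × G) X] {M : Mean G} {m : Mean X} {c : Fin 3 → Set X}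

/-- The corners whose `j`-th edge lies in `c j` for all `j`. Membership is imposed at one end point
of each edge only, as `c j` will be invariant in the `j`-th edge direction. -/
def cell (c : Fin 3 → Set X) : Set (G × X) := {p | ∀ j, corner (j + 1) p ∈ c j}

/-- The part of a cell relevant at the `i`-th vertex. -/
def vertexCell (c : Fin 3 → Set X) (i : Fin 3) : Set X := c (i + 1) ∩ c (i + 2)

theorem mem_cell_iff (hc : ∀ j, EdgeInvariant G j (· ∈ c j)) {p : G × X} (i : Fin 3) :
    p ∈ cell c ↔ corner i p ∈ vertexCell c i ∧ corner (i + 1) p ∈ c i := by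
  have h := fun j => iff_of_eq ((hc j).corner_eq p)
  simp only [cell, vertexCell, Set.mem_ofPred_eq, Set.mem_inter_iff, Fin.forall_fin_succ] at h ⊢
  fin_cases i <;> simp at h ⊢ <;> tauto

theorem indicator_cell (hc : ∀ j, EdgeInvariant G j (· ∈ c j)) (p : G × X) (i : Fin 3) :
    𝟙(cell c) p = 𝟙(vertexCell c (i + 1)) (corner (i + 1) p) *
      𝟙(vertexCell c (i + 2)) (corner (i + 2) p) := by
  have hmem : p ∈ cell c ↔ corner (i + 1) p ∈ vertexCell c (i + 1) ∧
      corner (i + 2) p ∈ vertexCell c (i + 2) := by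
    have h := fun j => iff_of_eq ((hc j).corner_eq p)
    simp only [cell, vertexCell, Set.mem_ofPred_eq, Set.mem_inter_iff, Fin.forall_fin_succ] at h ⊢
    fin_cases i <;> simp at h ⊢ <;> tauto
  by_cases h₁ : corner (i + 1) p ∈ vertexCell c (i + 1) <;>
    by_cases h₂ : corner (i + 2) p ∈ vertexCell c (i + 2) <;> simp [*]

theorem content_corner_inter_corner (hM : M.IsBiInvariant) (hm : m.IsErgodic (G × G)) {H : Set X}
    {i : Fin 3} (hH : EdgeInvariant G i (· ∈ H)) (B : Set X) :
    (M.prod m).content (corner i ⁻¹' B ∩ corner (i + 1) ⁻¹' H) = m.content B * m.content H := by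
  let σ : G → G × G := fun y => vertex (i + 1) y * (vertex i y)⁻¹
  have hσ : ∀ g : G × G, ∃ l r : G, ∀ y, ∃ z, σ y * g⁻¹ = edge i z * σ (l * y * r) := by
    rintro ⟨s, t⟩
    fin_cases i
    · exact ⟨1, t⁻¹, fun y => ⟨s⁻¹, by simp [σ, vertex, edge]⟩⟩
    · exact ⟨t, s⁻¹, fun y => ⟨t⁻¹, by simp [σ, vertex, edge, mul_assoc]⟩⟩
    · exact ⟨s, 1, fun y => ⟨y⁻¹ * t⁻¹ * s * y, by simp [σ, vertex, edge, mul_assoc]⟩⟩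
  rw [← ergodic_average hM hm (σ := σ) (fun g => ?_) B]
  · refine congrArg M (funext fun y => ?_)
    rw [← hm.1.preimage_smul (vertex i y)]
    have hσ_smul : ∀ x : X, σ y • vertex i y • x = vertex (i + 1) y • x := by simp [σ, smul_smul]
    simp only [Set.preimage_inter, Set.preimage_preimage, hσ_smul]
    rfl
  · obtain ⟨l, r, h⟩ := hσ g
    refine ⟨l, r, fun y x => ?_⟩
    obtain ⟨z, hz⟩ := h y
    rw [smul_smul, hz, mul_smul]
    exact iff_of_eq (hH z _)

theorem content_cell_inter (hM : M.IsBiInvariant) (hm : m.IsErgodic (G × G))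
    (hc : ∀ j, EdgeInvariant G j (· ∈ c j)) (i : Fin 3) (B : Set X) :
    (M.prod m).content (cell c ∩ corner i ⁻¹' B) =
      m.content (vertexCell c i ∩ B) * m.content (c i) := by
  rw [← content_corner_inter_corner hM hm (hc i)]
  congr 1
  ext p
  simp only [Set.mem_inter_iff, mem_cell_iff hc i, Set.mem_preimage]
  tauto

theorem sq_div_two_le_content_cell_diff (hM : M.IsBiInvariant) (hm : m.IsErgodic (G × G))
    (hc : ∀ j, EdgeInvariant G j (· ∈ c j)) {H : Fin 3 → Set X}
    (hH : ∀ i, 6 * m.content (vertexCell c i ∩ H i) ≤ m.content (vertexCell c i)) :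
    m.content (⋂ j, c j) ^ 2 / 2 ≤
      (M.prod m).content (cell c \ ⋃ i, corner i ⁻¹' H i) := by
  have hν := (M.prod m).isContent
  have hcell : ∀ i, (M.prod m).content (cell c) =
      m.content (vertexCell c i) * m.content (c i) := fun i => by
    simpa using content_cell_inter hM hm hc i Set.univ
  have hsq : m.content (⋂ j, c j) ^ 2 ≤ (M.prod m).content (cell c) := by
    rw [hcell 0, sq]
    exact mul_le_mul
      (m.isContent.mono (Set.subset_inter (Set.iInter_subset c _) (Set.iInter_subset c _)))
      (m.isContent.mono (Set.iInter_subset c _)) (m.isContent.nonneg _) (m.isContent.nonneg _)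
  have hbad : ∀ i, 6 * (M.prod m).content (cell c ∩ corner i ⁻¹' H i) ≤
      (M.prod m).content (cell c) := fun i => by
    rw [content_cell_inter hM hm hc, hcell i, ← mul_assoc]
    exact mul_le_mul_of_nonneg_right (hH i) (m.isContent.nonneg _)
  have hunion := hν.iUnion_le fun i => cell c ∩ corner i ⁻¹' H i
  rw [← Set.inter_iUnion, Fin.sum_univ_three] at hunion
  have hsplit := hν.inter_add_diff (cell c) (⋃ i, corner i ⁻¹' H i)
  linarith [hbad 0, hbad 1, hbad 2]

/-- The trilinear form restricted to a cell. -/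
noncomputable def cellTri (M : Mean G) (m : Mean X) (c : Fin 3 → Set X) (f : Fin 3 → X → ℝ) : ℝ :=
  M.prod m fun p => 𝟙(cell c) p * ∏ i, f i (corner i p)

theorem cellTri_eq_tri (hc : ∀ j, EdgeInvariant G j (· ∈ c j)) (f : Fin 3 → X → ℝ) (i : Fin 3) :
    cellTri M m c f =
      tri M m (Function.update (fun j x => 𝟙(vertexCell c j) x * f j x) i (f i)) := by
  refine congrArg (M.prod m) (funext fun p => ?_)
  simp only [indicator_cell hc p i, Fin.prod_univ_three]
  fin_cases i <;> simp <;> ring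

theorem cellTri_indicator_le_tri (A : Set X) :
    (cellTri M m c fun _ => 𝟙A) ≤ tri M m fun _ => 𝟙A := by
  have : ∀ i : Fin 3, Bdd fun p : G × X => 𝟙A (corner i p) := fun i =>
    (bdd_indicator A).comp (corner i)
  exact (M.prod m).mono (by fun_prop) (by fun_prop) fun p => mul_le_of_le_one_left
    (Finset.prod_nonneg fun i _ => indicator_one_nonneg A _) (indicator_one_le_one _ p)

theorem pow_mul_content_le_cellTri {f : Fin 3 → X → ℝ} (hf : ∀ i, Bdd (f i))
    (hf0 : ∀ i x, 0 ≤ f i x) {θ : ℝ} (hθ : 0 ≤ θ) (hc : ∀ j, EdgeInvariant G j (· ∈ c j))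
    {H : Fin 3 → Set X} (hfH : ∀ i, ∀ x ∈ vertexCell c i, x ∉ H i → θ ≤ f i x) :
    θ ^ 3 * (M.prod m).content (cell c \ ⋃ i, corner i ⁻¹' H i) ≤ cellTri M m c f := by
  have : ∀ i : Fin 3, Bdd fun p : G × X => f i (corner i p) := fun i => (hf i).comp (corner i)
  refine (M.prod m).mul_content_le (by fun_prop) (fun p => mul_nonneg (indicator_one_nonneg _ p)
    (Finset.prod_nonneg fun i _ => hf0 i _)) ?_
  rintro p ⟨hp, hpH⟩
  simp only [Set.mem_iUnion, Set.mem_preimage, not_exists] at hpH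
  rw [Set.indicator_of_mem hp, Pi.one_apply, one_mul]
  calc θ ^ 3 = ∏ _i : Fin 3, θ := by simp
    _ ≤ _ := Finset.prod_le_prod (fun _ _ => hθ) fun i _ =>
      hfH i _ ((mem_cell_iff hc i).1 hp).1 (hpH i)

end Cell

namespace Labelling

variable {P : Labelling 𝒳}

theorem isUnitSimple_approx (hP : ∀ i x, P.approx i x ∈ Set.Icc 0 1) (i : Fin 3) :
    IsUnitSimple (P.approx i) where
  finite_range := P.finite_range_approx i
  abs_le_one x := abs_le.2 ⟨by linarith [(hP i x).1], (hP i x).2⟩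

theorem isUnitSimple_error (hP : ∀ i x, P.approx i x ∈ Set.Icc 0 1) (i : Fin 3) :
    IsUnitSimple (P.error i) where
  finite_range := by
    refine ((finite_range_indicator_one 𝒳.A).image2 (· - ·) (P.finite_range_approx i)).subset ?_
    rintro _ ⟨x, rfl⟩
    exact ⟨_, ⟨x, rfl⟩, _, ⟨x, rfl⟩, rfl⟩
  abs_le_one x := (abs_sub_le_of_le_of_le (indicator_one_nonneg _ x)
    (indicator_one_le_one _ x) (hP i x).1 (hP i x).2).trans_eq (sub_zero 1)

namespace IsOptimal

variable {M : Mean G} {c : Fin 3 → Set 𝒳.X} {t : ℝ}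

theorem abs_cellTri_le (ht : 0 < t) (h : P.IsOptimal (t ^ 4)) (hM : M.IsBiInvariant)
    (hc : ∀ j, EdgeInvariant G j (· ∈ c j)) {f : Fin 3 → 𝒳.X → ℝ}
    (hf : ∀ i, IsUnitSimple (f i)) {i : Fin 3} (hi : f i = P.error i) :
    |cellTri M 𝒳.m c f| ≤ t := by
  rw [cellTri_eq_tri hc f i]
  refine h.abs_tri_le ht hM (fun j => ?_) (i := i) (by rw [Function.update_self, hi])
  by_cases hj : j = i
  · subst hj
    rw [Function.update_self]
    exact hf j
  · rw [Function.update_of_ne hj]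
    exact (IsUnitSimple.indicator _).mul (hf j)

theorem cellTri_sub_le (ht : 0 < t) (h : P.IsOptimal (t ^ 4))
    (hP : ∀ i x, P.approx i x ∈ Set.Icc 0 1) (hM : M.IsBiInvariant)
    (hc : ∀ j, EdgeInvariant G j (· ∈ c j)) :
    cellTri M 𝒳.m c P.approx - (cellTri M 𝒳.m c fun _ => 𝟙(𝒳.A)) ≤ 3 * t := by
  have hA : IsUnitSimple 𝟙(𝒳.A) := .indicator _
  have happrox := isUnitSimple_approx hP
  have herror := isUnitSimple_error hP
  have h₀ := h.abs_cellTri_le ht hM hc (f := ![P.error 0, 𝟙(𝒳.A), 𝟙(𝒳.A)]) (i := 0)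
    (by simp [Fin.forall_fin_succ, *]) rfl
  have h₁ := h.abs_cellTri_le ht hM hc (f := ![P.approx 0, P.error 1, 𝟙(𝒳.A)]) (i := 1)
    (by simp [Fin.forall_fin_succ, *]) rfl
  have h₂ := h.abs_cellTri_le ht hM hc (f := ![P.approx 0, P.approx 1, P.error 2]) (i := 2)
    (by simp [Fin.forall_fin_succ, *]) rfl
  have htelescope : (cellTri M 𝒳.m c fun _ => 𝟙(𝒳.A)) =
      cellTri M 𝒳.m c ![P.error 0, 𝟙(𝒳.A), 𝟙(𝒳.A)] +
      cellTri M 𝒳.m c ![P.approx 0, P.error 1, 𝟙(𝒳.A)] +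
      cellTri M 𝒳.m c ![P.approx 0, P.approx 1, P.error 2] + cellTri M 𝒳.m c P.approx := by
    simp only [cellTri, ← Mean.add, Fin.prod_univ_three, Matrix.cons_val, error]
    exact congrArg _ (funext fun p => by ring)
  linarith [neg_le_of_abs_le h₀, neg_le_of_abs_le h₁, neg_le_of_abs_le h₂]

theorem tri_pos (ht : 0 < t) (h : P.IsOptimal (t ^ 4)) (hP : ∀ i x, P.approx i x ∈ Set.Icc 0 1)
    (hM : M.IsBiInvariant) (hc : ∀ j, EdgeInvariant G j (· ∈ c j)) {H : Fin 3 → Set 𝒳.X}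
    (hH : ∀ i, 6 * 𝒳.m.content (vertexCell c i ∩ H i) ≤ 𝒳.m.content (vertexCell c i)) {θ : ℝ}
    (hθ : 0 ≤ θ) (hPH : ∀ i, ∀ x ∈ vertexCell c i, x ∉ H i → θ ≤ P.approx i x)
    (hlt : 6 * t < θ ^ 3 * 𝒳.m.content (⋂ j, c j) ^ 2) :
    0 < tri M 𝒳.m fun _ => 𝟙(𝒳.A) := by
  have hcount := sq_div_two_le_content_cell_diff hM 𝒳.ergodic hc hH
  have hmain := pow_mul_content_le_cellTri (M := M) (m := 𝒳.m) P.bdd_approx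
    (fun i x => (hP i x).1) hθ hc hPH
  have herror := h.cellTri_sub_le ht hP hM hc
  have htri := cellTri_indicator_le_tri (M := M) (m := 𝒳.m) (c := c) 𝒳.A
  have := mul_le_mul_of_nonneg_left hcount (pow_nonneg hθ 3)
  linarith

end IsOptimal

end Labelling

/-! ### Positivity of the corner form -/

theorem exists_pos_forall_le {ι : Type*} [Finite ι] (f : ι → ℝ) :
    ∃ κ > 0, ∀ i, 0 < f i → κ ≤ f i := by
  have h : ∀ᶠ κ in 𝓝[>] (0 : ℝ), ∀ i, 0 < f i → κ ≤ f i := eventually_all.2 fun i => by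
    by_cases hi : 0 < f i
    · filter_upwards [Ioc_mem_nhdsGT hi] with κ hκ _ using hκ.2
    · exact .of_forall fun κ h => absurd h hi
  obtain ⟨κ, hκ, hpos⟩ := (h.and self_mem_nhdsWithin).exists
  exact ⟨κ, hpos, hκ⟩

namespace Labelling

/-- The points sharing the `j`-th label with `x`. -/
def atom (P : Labelling 𝒳) (x : 𝒳.X) (j : Fin 3) : Set 𝒳.X := {z | P.label j z = P.label j x}

theorem edgeInvariant_atom (P : Labelling 𝒳) (x : 𝒳.X) (j : Fin 3) :
    EdgeInvariant G j (· ∈ P.atom x j) := fun y z =>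
  congrArg (· = P.label j x) (P.invariant j y z)

theorem vertexCell_atom (P : Labelling 𝒳) (x : 𝒳.X) (i : Fin 3) :
    vertexCell (P.atom x) i = (fun z => (P.label (i + 1) z, P.label (i + 2) z)) ⁻¹'
      {(P.label (i + 1) x, P.label (i + 2) x)} := by
  ext z
  simp [vertexCell, atom]

theorem iInter_atom (P : Labelling 𝒳) (x : 𝒳.X) :
    ⋂ j, P.atom x j = (fun z j => P.label j z) ⁻¹' {fun j => P.label j x} := by
  ext z
  simp [atom, funext_iff]

theorem approx_eq_of_mem_vertexCell {P : Labelling 𝒳} {i : Fin 3} {x z : 𝒳.X}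
    (hz : z ∈ vertexCell (P.atom x) i) : P.approx i z = P.approx i x :=
  congrArg₂ (P.value i) hz.1 hz.2

theorem exists_pos_forall_le_content_atom (P : Labelling 𝒳) : ∃ κ > 0, ∀ x,
    0 < 𝒳.m.content (⋂ j, P.atom x j) → κ ≤ 𝒳.m.content (⋂ j, P.atom x j) := by
  obtain ⟨κ, hκ, h⟩ := exists_pos_forall_le fun q : Fin 3 → P.ι =>
    𝒳.m.content ((fun z j => P.label j z) ⁻¹' {q})
  exact ⟨κ, hκ, fun x => by simpa only [iInter_atom] using h _⟩

theorem exists_good_atom (P : Labelling 𝒳) (H : Fin 3 → Set 𝒳.X) (l : ℝ)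
    (h : ∑ i, (𝒳.m.content (𝒳.A ∩ {x | P.approx i x < l}) + 6 * 𝒳.m.content (H i)) <
      𝒳.m.content 𝒳.A) :
    ∃ x, 0 < 𝒳.m.content (⋂ j, P.atom x j) ∧ ∀ i, l ≤ P.approx i x ∧
      6 * 𝒳.m.content (vertexCell (P.atom x) i ∩ H i) ≤ 𝒳.m.content (vertexCell (P.atom x) i) := by
  have hν := 𝒳.m.isContent
  let null : Set 𝒳.X := {x | 𝒳.m.content (⋂ j, P.atom x j) = 0}
  let low : Fin 3 → Set 𝒳.X := fun i => 𝒳.A ∩ {x | P.approx i x < l}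
  let dense : Fin 3 → Set 𝒳.X := fun i => {x | 𝒳.m.content (vertexCell (P.atom x) i) <
    6 * 𝒳.m.content (vertexCell (P.atom x) i ∩ H i)}
  have hnull : 𝒳.m.content null = 0 := by
    simpa only [null, iInter_atom] using hν.null_fiber fun z j => P.label j z
  have hdense : ∀ i, 𝒳.m.content (dense i) ≤ 6 * 𝒳.m.content (H i) := fun i => by
    simpa only [dense, vertexCell_atom] using hν.dense_fiber_le
      (fun z => (P.label (i + 1) z, P.label (i + 2) z)) (H i) (by norm_num : (0 : ℝ) ≤ 6)
  have hbad : 𝒳.m.content (null ∪ ⋃ i, low i ∪ dense i) < 𝒳.m.content 𝒳.A := by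
    refine ((hν.union_le _ _).trans ?_).trans_lt h
    rw [hnull, zero_add]
    exact (hν.iUnion_le _).trans (Finset.sum_le_sum fun i _ =>
      (hν.union_le _ _).trans (by gcongr; exact hdense i))
  obtain ⟨x, hxA, hx⟩ := Set.not_subset.1 fun hsub => hbad.not_ge (hν.mono hsub)
  simp only [null, low, dense, Set.mem_union, Set.mem_iUnion, Set.mem_inter_iff,
    Set.mem_ofPred_eq, not_or, not_exists, not_and, not_lt] at hx
  exact ⟨x, (hν.nonneg _).lt_of_ne' hx.1, fun i => ⟨(hx.2 i).1 hxA, (hx.2 i).2⟩⟩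

theorem IsOptimal.exists_good_atom {P : Labelling 𝒳} {t l : ℝ} (ht : 0 < t) (hl : 0 < l)
    (h : P.IsOptimal (t ^ 2)) (hP : ∀ i x, 0 ≤ P.approx i x) (e : Extension 𝒴 𝒳)
    {P' : Labelling 𝒴} (h' : P'.IsOptimal (t ^ 2))
    (hlt : 3 * (t + l + 144 * t ^ 2 / l ^ 2) < 𝒳.m.content 𝒳.A) :
    ∃ (x : 𝒴.X) (H : Fin 3 → Set 𝒴.X), 0 < 𝒴.m.content (⋂ j, (P.pull e).atom x j) ∧
      ∀ i, 6 * 𝒴.m.content (vertexCell ((P.pull e).atom x) i ∩ H i) ≤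
        𝒴.m.content (vertexCell ((P.pull e).atom x) i) ∧
        ∀ y ∈ vertexCell ((P.pull e).atom x) i, y ∉ H i → l / 2 ≤ P'.approx i y := by
  let H : Fin 3 → Set 𝒴.X := fun i => {y | l / 2 ≤ |P'.approx i y - P.approx i (e.π y)|}
  have hH : ∀ i, 𝒴.m.content (H i) ≤ 24 * t ^ 2 / l ^ 2 := fun i => by
    rw [le_div_iff₀ (by positivity)]
    linarith [h.sq_mul_content_le e h' i (half_pos hl).le]
  have hlow : ∀ i, 𝒴.m.content (𝒴.A ∩ {y | (P.pull e).approx i y < l}) ≤ t + l := fun i => by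
    rw [← e.preimage]
    exact (e.content_preimage _).trans_le (h.content_inter_approx_lt_le ht hP hl.le i)
  obtain ⟨x, hx, hgood⟩ := (P.pull e).exists_good_atom H l <| by
    rw [← e.preimage, e.content_preimage, e.preimage]
    refine (Finset.sum_le_sum fun i _ => add_le_add (hlow i)
      (mul_le_mul_of_nonneg_left (hH i) (by norm_num))).trans_lt ?_
    rw [Fin.sum_const, nsmul_eq_mul]
    exact lt_of_eq_of_lt (by push_cast; ring) hlt
  refine ⟨x, H, hx, fun i => ⟨(hgood i).2, fun y hy hyH => ?_⟩⟩
  have hPy := (approx_eq_of_mem_vertexCell hy).symm ▸ (hgood i).1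
  have hclose : |P'.approx i y - (P.pull e).approx i y| < l / 2 := not_le.1 hyH
  linarith [(abs_lt.1 hclose).1]

end Labelling

theorem System.tri_pos (𝒳 : System G) {M : Mean G} (hM : M.IsBiInvariant)
    (hA : 0 < 𝒳.m.content 𝒳.A) : 0 < tri M 𝒳.m fun _ => 𝟙(𝒳.A) := by
  obtain ⟨δ, hδ⟩ : ∃ δ, 𝒳.m.content 𝒳.A = δ := ⟨_, rfl⟩
  obtain ⟨l, hl⟩ : ∃ l, l = δ / 12 := ⟨_, rfl⟩
  obtain ⟨t, ht⟩ : ∃ t, t = l * δ / 40 := ⟨_, rfl⟩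
  have hδ0 : 0 < δ := hδ ▸ hA
  have hδ1 : δ ≤ 1 := hδ ▸ 𝒳.m.content_le_one _
  have hl0 : 0 < l := by rw [hl]; positivity
  have ht0 : 0 < t := by rw [ht]; positivity
  obtain ⟨𝒴, e, P, hP, hP01⟩ := Labelling.exists_isOptimal 𝒳 (pow_pos ht0 2)
  obtain ⟨κ, hκ, hκP⟩ := P.exists_pos_forall_le_content_atom
  obtain ⟨τ, hτ⟩ : ∃ τ, τ = (l / 2) ^ 3 * κ ^ 2 / 12 := ⟨_, rfl⟩
  have hτ0 : 0 < τ := by rw [hτ]; positivity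
  obtain ⟨𝒵, e', P', hP', hP'01⟩ :=
    Labelling.exists_isOptimal 𝒴 (lt_min (pow_pos hτ0 4) (pow_pos ht0 2))
  rw [← e.tri_eq, ← e'.tri_eq]
  obtain ⟨x, H, hx, hH⟩ := hP.exists_good_atom ht0 hl0 (fun i y => (hP01 i y).1) e'
    (hP'.mono (min_le_right _ _)) <| by
      rw [← e.preimage, e.content_preimage, hδ,
        show 144 * t ^ 2 / l ^ 2 = 144 * δ ^ 2 / 1600 by rw [ht]; field_simp; norm_num, ht, hl]
      nlinarith
  have hκx : κ ≤ 𝒵.m.content (⋂ j, (P.pull e').atom x j) := by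
    have heq : 𝒵.m.content (⋂ j, (P.pull e').atom x j) =
        𝒴.m.content (⋂ j, P.atom (e'.π x) j) := by
      rw [← e'.content_preimage, Set.preimage_iInter]
      rfl
    rw [heq] at hx ⊢
    exact hκP _ hx
  refine (hP'.mono (min_le_left _ _)).tri_pos hτ0 hP'01 hM ((P.pull e').edgeInvariant_atom x)
    (fun i => (hH i).1) (half_pos hl0).le (fun i => (hH i).2) ?_
  calc 6 * τ < (l / 2) ^ 3 * κ ^ 2 := by
        linarith [show 0 < (l / 2) ^ 3 * κ ^ 2 by positivity]
    _ ≤ _ := by gcongr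

/-! ### Recurrence and colourings -/

section Recurrence

variable {X : Type u} [MulAction (G × G) X] {M : Mean G} {m : Mean X}

theorem tri_indicator (M : Mean G) (m : Mean X) (A : Set X) :
    (tri M m fun _ => 𝟙A) = M fun y => m.content (⋂ i, (vertex i y • ·) ⁻¹' A) := by
  refine congrArg M (funext fun y => congrArg m (funext fun x => ?_))
  change (∏ i, 𝟙((vertex i y • ·) ⁻¹' A) x) = _
  simpa using prod_indicator_const_apply Finset.univ
    (fun i => (vertex i y • ·) ⁻¹' A) (1 : X → ℝ) x

theorem Mean.IsInvariant.recurrence (hm : m.IsInvariant (G × G)) (hM : M.IsBiInvariant)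
    {A : Set X} (hA : 0 < m.content A) :
    0 < M.content {y | 0 < m.content (⋂ i, (vertex i y • ·) ⁻¹' A)} := by
  set S : Set G := {y | 0 < m.content (⋂ i, (vertex i y • ·) ⁻¹' A)}
  obtain ⟨n, hn, hmn, hnull⟩ := exists_ergodic_absolutelyContinuous hm A
  have htri := System.tri_pos ⟨X, n, hn, A⟩ hM (hA.trans_le hmn)
  rw [tri_indicator] at htri
  refine htri.trans_le (M.mono ?_ (by fun_prop) fun y => ?_)
  · exact ⟨1, fun y => (abs_of_nonneg (n.isContent.nonneg _)).trans_le (n.content_le_one _)⟩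
  by_cases hy : y ∈ S
  · rw [Set.indicator_of_mem hy]
    exact n.content_le_one _
  · rw [Set.indicator_of_notMem hy]
    exact (hnull _ ((not_lt.1 hy).antisymm (m.isContent.nonneg _))).le

end Recurrence

theorem Mean.content_prod {X Y : Type*} (κ : Mean Y) (m : Mean X) (C : Set Y) (A : Set X) :
    (κ.prod m).content (C ×ˢ A) = κ.content C * m.content A := by
  rw [content, content, ← mul_const]
  refine congrArg κ (funext fun y => ?_)
  rw [content, ← const_mul]
  exact congrArg m (funext fun x => Set.indicator_prod_one)

/-- Finitely many sets of positive mean can be replaced by a single one, in a power of the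
action. -/
theorem Mean.IsInvariant.exists_power {Γ : Type*} {Y : Type u} [Monoid Γ] [MulAction Γ Y]
    {κ : Mean Y} (hκ : κ.IsInvariant Γ) {ι : Type*} (C : ι → Set Y) (s : Finset ι)
    (hC : ∀ i ∈ s, 0 < κ.content (C i)) :
    ∃ (X : Type u) (_ : MulAction Γ X) (m : Mean X) (A : Set X), m.IsInvariant Γ ∧
      0 < m.content A ∧ ∀ i ∈ s, ∃ π : X → Y, (∀ (g : Γ) x, π (g • x) = g • π x) ∧
        (∀ B, m.content (π ⁻¹' B) = κ.content B) ∧ A ⊆ π ⁻¹' C i := by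
  classical
  induction s using Finset.induction with
  | empty => exact ⟨Y, _, κ, Set.univ, hκ, κ.content_univ ▸ one_pos, by simp⟩
  | insert a s _ ih =>
    obtain ⟨hCa, hCs⟩ := (Finset.forall_mem_insert _ _ _).1 hC
    obtain ⟨X, _, m, A, hm, hA, hπ⟩ := ih hCs
    refine ⟨Y × X, inferInstance, κ.prod m, C a ×ˢ A, hκ.prod hm,
      κ.content_prod m _ _ ▸ mul_pos hCa hA,
      (Finset.forall_mem_insert _ _ _).2 ⟨?_, fun i hi => ?_⟩⟩
    · refine ⟨Prod.fst, fun _ _ => rfl, fun B => ?_, fun p hp => hp.1⟩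
      rw [← Set.prod_univ, Mean.content_prod, m.content_univ, mul_one]
    · obtain ⟨π, hsmul, hcontent, hsub⟩ := hπ i hi
      refine ⟨fun p => π p.2, fun g p => hsmul g p.2, fun B => ?_, fun p hp => hsub hp.2⟩
      rw [← hcontent B, ← one_mul (m.content _), ← κ.content_univ, ← κ.content_prod,
        Set.univ_prod]
      rfl

/-- The two-sided action of `G × G` on `G`. -/
local instance biMulAction : MulAction (G × G) G where
  smul p x := p.1 * x * p.2⁻¹
  one_smul x := show 1 * x * 1⁻¹ = x by group
  mul_smul p q x := show p.1 * q.1 * x * (p.2 * q.2)⁻¹ = p.1 * (q.1 * x * q.2⁻¹) * p.2⁻¹ by group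

theorem biMulAction_smul_def (p : G × G) (x : G) : p • x = p.1 * x * p.2⁻¹ := rfl

namespace Mean.IsBiInvariant

variable {M : Mean G}

theorem isInvariant (hM : M.IsBiInvariant) : M.IsInvariant (G × G) := fun g _ hf =>
  hM.left_right g.1 g.2⁻¹ hf

theorem content_vertex_preimage (hM : M.IsBiInvariant) (y : G) (C : Set G) :
    M.content (⋂ i, (vertex i y • ·) ⁻¹' C) =
      M.content {x | x ∈ C ∧ x * y ∈ C ∧ y * x ∈ C} := by
  have hpre : {x | x ∈ C ∧ x * y ∈ C ∧ y * x ∈ C} =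
      (· * y) ⁻¹' ⋂ i, (vertex i y • ·) ⁻¹' C := by
    ext x
    simp [Fin.forall_fin_succ, vertex, biMulAction_smul_def, mul_assoc]
    tauto
  rw [hpre]
  exact (hM.right y 𝟙(⋂ i, (vertex i y • ·) ⁻¹' C) (by fun_prop)).symm

theorem schur (hM : M.IsBiInvariant) {ι : Type*} [Finite ι] (c : G → ι) :
    0 < M.content {y | 0 < M.content {x | c x = c y ∧ c (x * y) = c y ∧ c (y * x) = c y}} := by
  have := Fintype.ofFinite ι
  classical
  obtain ⟨X, _, m, A, hm, hA, hπ⟩ := hM.isInvariant.exists_power (fun i => c ⁻¹' {i})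
    {i | 0 < M.content (c ⁻¹' {i})} (by simp)
  refine (hm.recurrence hM hA).trans_le ?_
  set S := {y | 0 < M.content {x | c x = c y ∧ c (x * y) = c y ∧ c (y * x) = c y}}
  calc _ ≤ M.content (S ∪ {y | M.content (c ⁻¹' {c y}) = 0}) := M.isContent.mono fun y hy => ?_
    _ ≤ M.content S := (M.isContent.union_le _ _).trans_eq <| by
        rw [M.isContent.null_fiber, add_zero]
  refine or_iff_not_imp_right.2 fun hnull => ?_
  obtain ⟨π, hsmul, hcontent, hsub⟩ := hπ (c y) <| Finset.mem_filter_univ _ |>.2 <|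
    (M.isContent.nonneg _).lt_of_ne' hnull
  refine lt_of_lt_of_eq ?_ (hM.content_vertex_preimage y (c ⁻¹' {c y}))
  rw [← hcontent]
  refine lt_of_lt_of_le hy (m.isContent.mono fun x hx => ?_)
  simp only [Set.mem_iInter, Set.mem_preimage] at hx ⊢
  intro i
  rw [← hsmul]
  exact hsub (hx i)

end Mean.IsBiInvariant

theorem exists_isBiInvariant_content_eq {μ : Set G → ℝ} (hμ : IsInvFAPM μ) :
    ∃ M : Mean G, M.IsBiInvariant ∧ M.content = μ := by
  obtain ⟨M, rfl⟩ := exists_mean ⟨hμ.nonneg, hμ.additive⟩ hμ.total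
  refine ⟨M, ⟨fun g f hf => ?_, fun g f hf => ?_⟩, rfl⟩
  · have hmap : (M.map (g * ·)).content = M.content := funext fun B => by
      rw [← Mean.content_preimage, ← hμ.left_invariant g, Set.image_preimage_eq _
        (Group.mulLeft_bijective g).2]
    exact Mean.eq_of_content_eq hmap hf
  · have hmap : (M.map (· * g)).content = M.content := funext fun B => by
      rw [← Mean.content_preimage, ← hμ.right_invariant g, Set.image_preimage_eq _
        (Group.mulRight_bijective g).2]
    exact Mean.eq_of_content_eq hmap hf

end NoncommSchur

theorem schur_xy_yx_many_x {G : Type*} [Group G] (μ : Set G → ℝ) (hμ : IsInvFAPM μ)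
    (r : ℕ) (hr : 1 ≤ r) (c : G → Fin r) :
    0 < μ {y | 0 < μ {x | c x = c y ∧ c (x * y) = c y ∧ c (y * x) = c y}} := by
  obtain ⟨M, hM, rfl⟩ := NoncommSchur.exists_isBiInvariant_content_eq hμ
  exact hM.schur c
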